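/- arXiv:2107.01500 — 3 statements merged into one kernel-verified Lean document; each statement's English description precedes it below -/
import Mathlib

section
/- Let n ≥ 1 and let K be a set of odd integers a with 3 ≤ a ≤ 2n−1 such that any two distinct elements of K differ by at least 4. Then the ideal of C[x1, ..., x_{2n+1}] generated by the polynomials {p_a : a ∈ K}, where p_a = x_{a−2}*x_{a−1} + x_{a+1}*x_{a+2}, is a prime ideal. -/
open MvPolynomial

/-- The variable `x_i` of `ℂ[x₁,…,x_{2n+1}]`, for `1 ≤ i ≤ 2n+1`
(indices are shifted into `Fin (2n+1)`). -/
noncomputable def xv (n i : ℕ) : MvPolynomial (Fin (2 * n + 1)) ℂ :=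
  X ⟨(i - 1) % (2 * n + 1), Nat.mod_lt _ (by omega)⟩

/-- The polynomial `p_a = x_{a-2} x_{a-1} + x_{a+1} x_{a+2}` of `ℂ[x₁,…,x_{2n+1}]`. -/
noncomputable def pv (n a : ℕ) : MvPolynomial (Fin (2 * n + 1)) ℂ :=
  xv n (a - 2) * xv n (a - 1) + xv n (a + 1) * xv n (a + 2)

/-- Splitting off one variable as a univariate polynomial variable. -/
noncomputable def splitVar {σ : Type} [DecidableEq σ] (y : σ) :
    MvPolynomial σ ℂ ≃ₐ[ℂ] Polynomial (MvPolynomial {i : σ // i ≠ y} ℂ) :=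
  (renameEquiv ℂ (Equiv.optionSubtypeNe y).symm).trans (optionEquivLeft ℂ _)

/-- `splitVar` as a ring homomorphism. -/
noncomputable def splitHom {σ : Type} [DecidableEq σ] (y : σ) :
    MvPolynomial σ ℂ →+* Polynomial (MvPolynomial {i : σ // i ≠ y} ℂ) :=
  (splitVar y).toRingEquiv.toRingHom

theorem splitHom_apply {σ : Type} [DecidableEq σ] (y : σ) (f : MvPolynomial σ ℂ) :
    splitHom y f = splitVar y f := rfl

theorem splitHom_bijective {σ : Type} [DecidableEq σ] (y : σ) :
    Function.Bijective (splitHom y) := (splitVar y).bijective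

theorem splitHom_X_self {σ : Type} [DecidableEq σ] (y : σ) :
    splitHom y (X y) = Polynomial.X := by
  rw [splitHom_apply]
  simp [splitVar, optionEquivLeft_apply]

theorem splitHom_rename {σ : Type} [DecidableEq σ] (y : σ)
    (q : MvPolynomial {i : σ // i ≠ y} ℂ) :
    splitHom y (rename Subtype.val q) = Polynomial.C q := by
  have h : (splitHom y).comp
      (rename (Subtype.val : {i : σ // i ≠ y} → σ) : _ →ₐ[ℂ] MvPolynomial σ ℂ).toRingHom
      = (Polynomial.C : _ →+* Polynomial (MvPolynomial {i : σ // i ≠ y} ℂ)) := by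
    apply MvPolynomial.ringHom_ext
    · intro a
      simp [splitHom_apply, splitVar, optionEquivLeft_apply]
    · intro i
      simp [splitHom_apply, splitVar, optionEquivLeft_apply, Equiv.optionSubtypeNe_symm_of_ne i.2]
  exact RingHom.congr_fun h q

theorem field_aux_one {F : Type} [Field F] (x g : F) (hx : x ≠ 0) :
    x * (-g / x) + g = 0 := by
  field_simp
  ring

theorem field_aux_two {F : Type} [Field F] (c x g : F) (i k : ℕ) (hx : x ≠ 0) :
    c * (-g) ^ i * x ^ k = c * (-g / x) ^ i * x ^ (i + k) := by
  rw [pow_add, div_pow]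
  field_simp

theorem poly_step {R : Type} [CommRing R] (I : Ideal R) [hI : I.IsPrime] (x g : R)
    (hx : x ∉ I) (hg : ∀ h, g * h ∈ I ⊔ Ideal.span {x} → h ∈ I ⊔ Ideal.span {x}) :
    (I.map (Polynomial.C : R →+* Polynomial R) ⊔
      Ideal.span {Polynomial.C x * Polynomial.X + Polynomial.C g}).IsPrime := by
  set J := I.map (Polynomial.C : R →+* Polynomial R) ⊔
      Ideal.span {Polynomial.C x * Polynomial.X + Polynomial.C g} with hJ
  let F := FractionRing (R ⧸ I)
  let ψ : R →+* F := (algebraMap (R ⧸ I) F).comp (Ideal.Quotient.mk I)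
  have hψ : ∀ r, ψ r = 0 ↔ r ∈ I := by
    intro r
    simp only [ψ, RingHom.comp_apply]
    rw [map_eq_zero_iff _ (IsFractionRing.injective (R ⧸ I) F), Ideal.Quotient.eq_zero_iff_mem]
  have hx0 : ψ x ≠ 0 := fun h => hx ((hψ x).1 h)
  let φ : Polynomial R →+* F := Polynomial.eval₂RingHom ψ (-(ψ g) / ψ x)
  have hφC : ∀ r, φ (Polynomial.C r) = ψ r := fun r => by simp [φ]
  have hφX : φ Polynomial.X = -(ψ g) / ψ x := by simp [φ]
  have hle : J ≤ RingHom.ker φ := by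
    rw [hJ, sup_le_iff, Ideal.map_le_iff_le_comap, Ideal.span_singleton_le_iff_mem]
    constructor
    · intro r hr
      rw [Ideal.mem_comap, RingHom.mem_ker, hφC, hψ]
      exact hr
    · rw [RingHom.mem_ker, map_add, map_mul, hφC, hφC, hφX]
      exact field_aux_one _ _ hx0
  have hgp : ∀ (d : ℕ) h, g ^ d * h ∈ I ⊔ Ideal.span {x} → h ∈ I ⊔ Ideal.span {x} := by
    intro d
    induction d with
    | zero => intro h hh; simpa using hh
    | succ d ih =>
      intro h hh
      apply hg
      apply ih
      rw [pow_succ, mul_assoc] at hh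
      exact hh
  have key : ∀ (d : ℕ) (f : Polynomial R), f.natDegree ≤ d → φ f = 0 → f ∈ J := by
    intro d
    induction d with
    | zero =>
      intro f hf h0
      rw [Polynomial.eq_C_of_natDegree_le_zero hf] at h0 ⊢
      rw [hφC, hψ] at h0
      exact Ideal.mem_sup_left (Ideal.mem_map_of_mem _ h0)
    | succ d ih =>
      intro f hf h0
      have hsum : ψ (∑ i ∈ Finset.range (d + 2), f.coeff i * (-g) ^ i * x ^ (d + 1 - i)) = 0 := by
        have h1 : φ f = ∑ i ∈ Finset.range (d + 2), ψ (f.coeff i) * (-(ψ g) / ψ x) ^ i := by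
          simp only [φ, Polynomial.coe_eval₂RingHom]
          exact Polynomial.eval₂_eq_sum_range' ψ (by omega) _
        have h2 : ψ (∑ i ∈ Finset.range (d + 2), f.coeff i * (-g) ^ i * x ^ (d + 1 - i))
            = φ f * ψ x ^ (d + 1) := by
          rw [h1, map_sum, Finset.sum_mul]
          apply Finset.sum_congr rfl
          intro i hi
          have hi' : i ≤ d + 1 := by
            have := Finset.mem_range.1 hi
            omega
          obtain ⟨k, hk⟩ := Nat.exists_eq_add_of_le hi'
          rw [hk, Nat.add_sub_cancel_left, map_mul, map_mul, map_pow, map_pow, map_neg]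
          exact field_aux_two _ _ _ _ _ hx0
        rw [h2, h0, zero_mul]
      rw [hψ, Finset.sum_range_succ] at hsum
      have hmem : f.coeff (d + 1) ∈ I ⊔ Ideal.span {x} := by
        apply hgp (d + 1)
        have h3 : ∑ i ∈ Finset.range (d + 1), f.coeff i * (-g) ^ i * x ^ (d + 1 - i)
            ∈ I ⊔ Ideal.span {x} := by
          apply Ideal.sum_mem
          intro i hi
          have := Finset.mem_range.1 hi
          apply Ideal.mul_mem_left
          apply Ideal.pow_mem_of_mem _ _ _ (by omega)
          exact Ideal.mem_sup_right (Ideal.mem_span_singleton_self x)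
        have h4 := Ideal.sub_mem _ (Ideal.mem_sup_left hsum : _ ∈ I ⊔ Ideal.span {x}) h3
        have h5 := Ideal.mul_mem_left _ ((-1) ^ (d + 1)) h4
        have h6 : (-1 : R) ^ (d + 1) * (-1) ^ (d + 1) = 1 := by
          rw [← mul_pow]; simp
        convert h5 using 1
        rw [add_sub_cancel_left, Nat.sub_self, pow_zero, neg_pow g]
        linear_combination (-(g ^ (d + 1) * f.coeff (d + 1))) * h6
      obtain ⟨i, hi, s, hs, his⟩ := Submodule.mem_sup.1 hmem
      obtain ⟨r, rfl⟩ := Ideal.mem_span_singleton'.1 hs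
      set q : Polynomial R := Polynomial.C i * Polynomial.X ^ (d + 1) +
        Polynomial.C r * Polynomial.X ^ d * (Polynomial.C x * Polynomial.X + Polynomial.C g) with hq
      have hqJ : q ∈ J := by
        apply Ideal.add_mem
        · exact Ideal.mul_mem_right _ _ (Ideal.mem_sup_left (Ideal.mem_map_of_mem _ hi))
        · exact Ideal.mul_mem_left _ _ (Ideal.mem_sup_right (Ideal.mem_span_singleton_self _))
      have hq' : q = Polynomial.C (f.coeff (d + 1)) * Polynomial.X ^ (d + 1) +
          Polynomial.C (r * g) * Polynomial.X ^ d := by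
        rw [hq, ← his]
        simp only [Polynomial.C_add, Polynomial.C_mul]
        ring
      have hfq : f - q ∈ J := by
        apply ih
        · rw [Polynomial.natDegree_le_iff_coeff_eq_zero]
          intro N hN
          rw [hq', Polynomial.coeff_sub, Polynomial.coeff_add, Polynomial.coeff_C_mul_X_pow,
            Polynomial.coeff_C_mul_X_pow, if_neg (by omega : ¬ N = d)]
          split_ifs with h
          · rw [h]; simp
          · rw [Polynomial.coeff_eq_zero_of_natDegree_lt (by omega)]; simp
        · rw [map_sub, h0, RingHom.mem_ker.1 (hle hqJ), sub_zero]
      have := Ideal.add_mem _ hfq hqJ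
      rwa [sub_add_cancel] at this
  have hJk : J = RingHom.ker φ :=
    le_antisymm hle fun f hf => key _ f le_rfl (RingHom.mem_ker.1 hf)
  rw [hJk]
  exact RingHom.ker_isPrime φ

theorem exists_rename_of_supported {σ : Type} (y : σ) (t : MvPolynomial σ ℂ)
    (ht : t ∈ supported ℂ ({y}ᶜ : Set σ)) :
    ∃ q : MvPolynomial {i : σ // i ≠ y} ℂ, rename Subtype.val q = t := by
  rw [supported_eq_range_rename] at ht
  obtain ⟨q, hq⟩ := ht
  exact ⟨q, hq⟩

/-- An ideal generated away from `y` is extended from its contraction. -/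
theorem map_splitHom {σ : Type} [DecidableEq σ] (y : σ) (T : Set (MvPolynomial σ ℂ))
    (hT : T ⊆ supported ℂ ({y}ᶜ : Set σ)) :
    (Ideal.span T).map (splitHom y) =
      ((Ideal.span T).comap (rename Subtype.val : MvPolynomial {i : σ // i ≠ y} ℂ →ₐ[ℂ] _)).map
        (Polynomial.C : _ →+* Polynomial (MvPolynomial {i : σ // i ≠ y} ℂ)) := by
  apply le_antisymm
  · rw [Ideal.map_le_iff_le_comap, Ideal.span_le]
    intro t ht
    obtain ⟨q, rfl⟩ := exists_rename_of_supported y t (hT ht)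
    have : splitHom y (rename Subtype.val q) = Polynomial.C q := splitHom_rename y q
    simp only [SetLike.mem_coe, Ideal.mem_comap, this]
    exact Ideal.mem_map_of_mem _ (Ideal.mem_comap.2 (Ideal.subset_span ht))
  · rw [Ideal.map_le_iff_le_comap]
    intro q hq
    rw [Ideal.mem_comap, ← splitHom_rename y q]
    exact Ideal.mem_map_of_mem (splitHom y) (Ideal.mem_comap.1 hq)

theorem mem_map_splitHom {σ : Type} [DecidableEq σ] (y : σ) (I : Ideal (MvPolynomial σ ℂ))
    (f : MvPolynomial σ ℂ) :
    splitHom y f ∈ I.map (splitHom y) ↔ f ∈ I := by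
  constructor
  · intro h
    obtain ⟨g, hg, hgf⟩ := (Ideal.mem_map_iff_of_surjective
      (splitHom y) (splitHom_bijective y).surjective).1 h
    have : g = f := (splitHom_bijective y).injective hgf
    exact this ▸ hg
  · intro h
    exact Ideal.mem_map_of_mem (splitHom y) h

theorem X_regular {σ : Type} [DecidableEq σ] (z : σ) (T : Set (MvPolynomial σ ℂ))
    (hT : T ⊆ supported ℂ ({z}ᶜ : Set σ)) (h : MvPolynomial σ ℂ)
    (hh : X z * h ∈ Ideal.span T) : h ∈ Ideal.span T := by
  rw [← mem_map_splitHom z, map_splitHom z T hT, Ideal.mem_map_C_iff] at hh ⊢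
  intro n
  have := hh (n + 1)
  rwa [map_mul, splitHom_X_self, Polynomial.coeff_X_mul] at this

theorem prime_step {σ : Type} [DecidableEq σ] (T : Set (MvPolynomial σ ℂ)) (x y z w : σ)
    (hxy : x ≠ y) (hxz : x ≠ z) (hxw : x ≠ w) (hyz : z ≠ y) (hyw : w ≠ y)
    (hTy : T ⊆ supported ℂ ({y}ᶜ : Set σ)) (hTz : T ⊆ supported ℂ ({z}ᶜ : Set σ))
    (hTw : T ⊆ supported ℂ ({w}ᶜ : Set σ))
    (hp : (Ideal.span T).IsPrime) (hx : X x ∉ Ideal.span T) :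
    (Ideal.span (insert (X x * X y + X z * X w) T)).IsPrime := by
  let ι : MvPolynomial {i : σ // i ≠ y} ℂ →ₐ[ℂ] MvPolynomial σ ℂ := rename Subtype.val
  let I' := (Ideal.span T).comap ι
  have hI' : I'.IsPrime := Ideal.IsPrime.comap ι
  let x' : MvPolynomial {i : σ // i ≠ y} ℂ := X ⟨x, hxy⟩
  let z' : MvPolynomial {i : σ // i ≠ y} ℂ := X ⟨z, hyz⟩
  let w' : MvPolynomial {i : σ // i ≠ y} ℂ := X ⟨w, hyw⟩
  have ιx : ι x' = X x := by simp [ι, x']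
  have ιz : ι z' = X z := by simp [ι, z']
  have ιw : ι w' = X w := by simp [ι, w']
  have sx : splitHom y (X x) = Polynomial.C x' := by rw [← ιx]; exact splitHom_rename y x'
  have sz : splitHom y (X z) = Polynomial.C z' := by rw [← ιz]; exact splitHom_rename y z'
  have sw : splitHom y (X w) = Polynomial.C w' := by rw [← ιw]; exact splitHom_rename y w'
  have hins : (Ideal.span (insert (X x) T)).map (splitHom y) =
      (I' ⊔ Ideal.span {x'}).map (Polynomial.C : _ →+* Polynomial _) := by
    rw [Ideal.span_insert, sup_comm, Ideal.map_sup, Ideal.map_sup, map_splitHom y T hTy,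
      Ideal.map_span, Ideal.map_span, Set.image_singleton, Set.image_singleton]
    simp only [sx]
    rfl
  have hmem : ∀ h, h ∈ I' ⊔ Ideal.span {x'} ↔ ι h ∈ Ideal.span (insert (X x) T) := by
    intro h
    rw [← mem_map_splitHom y, hins]
    have : splitHom y (ι h) = Polynomial.C h := splitHom_rename y h
    rw [this, Ideal.mem_map_C_iff]
    constructor
    · intro hh n
      rw [Polynomial.coeff_C]
      split_ifs
      · exact hh
      · exact Ideal.zero_mem _
    · intro hh
      simpa using hh 0
  have hreg : ∀ h, z' * w' * h ∈ I' ⊔ Ideal.span {x'} → h ∈ I' ⊔ Ideal.span {x'} := by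
    intro h hh
    rw [hmem] at hh ⊢
    rw [map_mul, map_mul, ιz, ιw, mul_assoc] at hh
    apply X_regular w
    · exact Set.insert_subset (X_mem_supported.2 hxw) hTw
    apply X_regular z
    · exact Set.insert_subset (X_mem_supported.2 hxz) hTz
    exact hh
  have hx' : x' ∉ I' := by
    intro h
    apply hx
    rw [← ιx]
    exact Ideal.mem_comap.1 h
  have hprime := poly_step I' x' (z' * w') hx' hreg
  have hJ : (Ideal.span (insert (X x * X y + X z * X w) T)).map
      (splitHom y) = I'.map (Polynomial.C : _ →+* Polynomial _) ⊔
      Ideal.span {Polynomial.C x' * Polynomial.X + Polynomial.C (z' * w')} := by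
    rw [Ideal.span_insert, sup_comm, Ideal.map_sup, map_splitHom y T hTy,
      Ideal.map_span, Set.image_singleton]
    simp only [map_add, map_mul, sx, sz, sw, splitHom_X_self]
    rfl
  have hcomap : Ideal.span (insert (X x * X y + X z * X w) T) =
      ((Ideal.span (insert (X x * X y + X z * X w) T)).map
      (splitHom y)).comap (splitHom y) := by
    ext f
    rw [Ideal.mem_comap]
    exact (mem_map_splitHom y _ f).symm
  rw [hcomap, hJ]
  exact Ideal.IsPrime.comap _

theorem xv_eq (n i : ℕ) (h1 : 1 ≤ i) (h2 : i ≤ 2 * n + 1) :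
    xv n i = X (⟨i - 1, by omega⟩ : Fin (2 * n + 1)) := by
  unfold xv
  congr 2
  exact Nat.mod_eq_of_lt (by omega)

theorem pv_eq (n a : ℕ) (h1 : 3 ≤ a) (h2 : a ≤ 2 * n - 1) :
    pv n a = X (⟨a - 3, by omega⟩ : Fin (2 * n + 1)) * X (⟨a - 2, by omega⟩ : Fin (2 * n + 1))
      + X (⟨a, by omega⟩ : Fin (2 * n + 1)) * X (⟨a + 1, by omega⟩ : Fin (2 * n + 1)) := by
  unfold pv
  rw [xv_eq n (a - 2) (by omega) (by omega), xv_eq n (a - 1) (by omega) (by omega),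
    xv_eq n (a + 1) (by omega) (by omega), xv_eq n (a + 2) (by omega) (by omega)]
  rfl

theorem pv_supported (n a m : ℕ) (h1 : 3 ≤ a) (h2 : a ≤ 2 * n - 1) (hm : m < 2 * n + 1)
    (ham : a + 1 < m) : pv n a ∈ supported ℂ ({⟨m, hm⟩}ᶜ : Set (Fin (2 * n + 1))) := by
  rw [pv_eq n a h1 h2]
  have hX : ∀ i (hi : i < 2 * n + 1), i < m →
      (X ⟨i, hi⟩ : MvPolynomial (Fin (2 * n + 1)) ℂ) ∈
        supported ℂ ({⟨m, hm⟩}ᶜ : Set (Fin (2 * n + 1))) := by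
    intro i hi him
    rw [X_mem_supported]
    simp only [Set.mem_compl_iff, Set.mem_singleton_iff, Fin.mk.injEq]
    omega
  exact add_mem (mul_mem (hX _ _ (by omega)) (hX _ _ (by omega)))
    (mul_mem (hX _ _ (by omega)) (hX _ _ (by omega)))

theorem span_p_finset (n : ℕ) (s : Finset ℕ)
    (hbd : ∀ a ∈ s, 3 ≤ a ∧ a ≤ 2 * n - 1)
    (hsep : ∀ a ∈ s, ∀ b ∈ s, a ≠ b → a + 4 ≤ b ∨ b + 4 ≤ a) :
    (Ideal.span ((fun a => pv n a) '' (s : Set ℕ))).IsPrime := by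
  induction s using Finset.induction_on_max with
  | empty => simpa using Ideal.isPrime_bot
  | insert a s hlt ih =>
    have hp := ih (fun b hb => hbd b (Finset.mem_insert_of_mem hb))
      (fun b hb c hc => hsep b (Finset.mem_insert_of_mem hb) c (Finset.mem_insert_of_mem hc))
    obtain ⟨ha1, ha2⟩ := hbd a (Finset.mem_insert_self a s)
    have hs : ∀ b ∈ s, 3 ≤ b ∧ b ≤ 2 * n - 1 ∧ b + 4 ≤ a := by
      intro b hb
      have h1 := hbd b (Finset.mem_insert_of_mem hb)
      have h2 := hlt b hb
      have h3 := hsep b (Finset.mem_insert_of_mem hb) a (Finset.mem_insert_self a s) (by omega)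
      omega
    rw [Finset.coe_insert, Set.image_insert_eq, pv_eq n a ha1 ha2]
    have hsup : ∀ m (hm : m < 2 * n + 1), a - 2 ≤ m →
        ((fun a => pv n a) '' (s : Set ℕ)) ⊆
          supported ℂ ({⟨m, hm⟩}ᶜ : Set (Fin (2 * n + 1))) := by
      rintro m hm ham _ ⟨b, hb, rfl⟩
      have := hs b hb
      exact pv_supported n b m (by omega) (by omega) hm (by omega)
    apply prime_step
    · simp only [ne_eq, Fin.mk.injEq]; omega
    · simp only [ne_eq, Fin.mk.injEq]; omega
    · simp only [ne_eq, Fin.mk.injEq]; omega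
    · simp only [ne_eq, Fin.mk.injEq]; omega
    · simp only [ne_eq, Fin.mk.injEq]; omega
    · exact hsup _ _ (by omega)
    · exact hsup _ _ (by omega)
    · exact hsup _ _ (by omega)
    · exact hp
    · intro hmem
      let ev : MvPolynomial (Fin (2 * n + 1)) ℂ →+* ℂ :=
        eval (fun i => if i = ⟨a - 3, by omega⟩ then 1 else 0)
      have hle : Ideal.span ((fun a => pv n a) '' (s : Set ℕ)) ≤ RingHom.ker ev := by
        rw [Ideal.span_le]
        rintro _ ⟨b, hb, rfl⟩
        have := hs b hb
        simp only [SetLike.mem_coe, RingHom.mem_ker]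
        rw [pv_eq n b (by omega) (by omega)]
        simp only [ev, map_add, map_mul, eval_X, Fin.mk.injEq]
        rw [if_neg (by omega : ¬ b - 3 = a - 3), if_neg (by omega : ¬ b = a - 3)]
        simp
      have := RingHom.mem_ker.1 (hle hmem)
      simp [ev] at this

/-- Let `n ≥ 1` and let `K` be a set of odd integers `a` with `3 ≤ a ≤ 2n−1` such that
any two distinct elements of `K` differ by at least `4`.  Then the ideal of
`ℂ[x₁,…,x_{2n+1}]` generated by the polynomials `p_a = x_{a−2}x_{a−1} + x_{a+1}x_{a+2}`
for `a ∈ K` is a prime ideal. -/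
theorem span_p_isPrime (n : ℕ) (hn : 1 ≤ n) (K : Set ℕ)
    (hodd : ∀ a ∈ K, Odd a)
    (hbd : ∀ a ∈ K, 3 ≤ a ∧ a ≤ 2 * n - 1)
    (hsep : ∀ a ∈ K, ∀ b ∈ K, a ≠ b → a + 4 ≤ b ∨ b + 4 ≤ a) :
    (Ideal.span ((fun a => pv n a) '' K)).IsPrime := by
  have hfin : K.Finite := (Set.finite_Iic (2 * n - 1)).subset fun a ha => (hbd a ha).2
  obtain ⟨s, rfl⟩ := hfin.exists_finset_coe
  exact span_p_finset n s hbd hsep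
end

section
/- For every n ≥ 3, every S ∈ F_n, and every S-admissible set B: the ideal I_B generated by B in C[x1, ..., x_{2n+1}] is a prime ideal; B is an irredundant generating set of I_B (no proper subset of B generates I_B); and the Krull dimension of the quotient ring C[x1, ..., x_{2n+1}]/I_B equals 2n+1−|B|. -/
open MvPolynomial

/-- `A'_n = {3, 5, 7, …, 2n−1}`, the odd numbers between `3` and `2n−1`. -/
def Aset' (n : ℕ) : Finset ℕ :=
  (Finset.range (2 * n)).filter (fun a => a % 2 = 1 ∧ 3 ≤ a)

/-- `A_n = A'_n \ {3, 2n−1}`. -/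
def Aset (n : ℕ) : Finset ℕ :=
  (Aset' n).filter (fun a => a ≠ 3 ∧ a ≠ 2 * n - 1)

/-- `S` is a Fibonacci subset of `A'_n`: for every `1 ≤ j ≤ n−2`,
`2j+1 ∈ S` or `2j+3 ∈ S`. -/
def IsFib (n : ℕ) (S : Finset ℕ) : Prop :=
  S ⊆ Aset' n ∧ ∀ j, 1 ≤ j → j ≤ n - 2 → (2 * j + 1 ∈ S ∨ 2 * j + 3 ∈ S)

/-- `U1 = {x_i : i ∈ S}`. -/
noncomputable def U1 (n : ℕ) (S : Finset ℕ) : Finset (MvPolynomial (Fin (2 * n + 1)) ℂ) :=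
  S.image (xv n)

/-- The allowable choices of `U2`. -/
def U2ok (n : ℕ) (S : Finset ℕ) (U : Finset (MvPolynomial (Fin (2 * n + 1)) ℂ)) : Prop :=
  (3 ∉ S ∧ 5 ∈ S ∧ U = {xv n 1, xv n 2}) ∨
  (3 ∈ S ∧ 5 ∈ S ∧ (U = {xv n 1} ∨ U = {xv n 2})) ∨
  (3 ∈ S ∧ 5 ∉ S ∧ U = {pv n 3})

/-- The allowable choices of `U3`. -/
def U3ok (n : ℕ) (S : Finset ℕ) (U : Finset (MvPolynomial (Fin (2 * n + 1)) ℂ)) : Prop :=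
  (2 * n - 1 ∉ S ∧ 2 * n - 3 ∈ S ∧ U = {xv n (2 * n), xv n (2 * n + 1)}) ∨
  (2 * n - 3 ∈ S ∧ 2 * n - 1 ∈ S ∧ (U = {xv n (2 * n)} ∨ U = {xv n (2 * n + 1)})) ∨
  (2 * n - 1 ∈ S ∧ 2 * n - 3 ∉ S ∧ U = {pv n (2 * n - 1)})

/-- The contribution `T_a` to `U4` for `a ∈ A_n`. -/
noncomputable def Tpart (n : ℕ) (S : Finset ℕ) (a : ℕ) :
    Finset (MvPolynomial (Fin (2 * n + 1)) ℂ) :=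
  if a - 2 ∈ S then (if a + 2 ∈ S then ∅ else {xv n (a + 1)})
  else (if a + 2 ∈ S then {xv n (a - 1)} else {pv n a})

/-- `U4 = ⋃_{a ∈ A_n} T_a`. -/
noncomputable def U4 (n : ℕ) (S : Finset ℕ) : Finset (MvPolynomial (Fin (2 * n + 1)) ℂ) :=
  (Aset n).biUnion (Tpart n S)

/-- `B` is an `S`-admissible set: `B = U1 ∪ U2 ∪ U3 ∪ U4` for some allowable `U2, U3`. -/
def IsAdmissible (n : ℕ) (S : Finset ℕ) (B : Finset (MvPolynomial (Fin (2 * n + 1)) ℂ)) :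
    Prop :=
  ∃ U2 U3, U2ok n S U2 ∧ U3ok n S U3 ∧ B = U1 n S ∪ U2 ∪ U3 ∪ U4 n S


section Core
set_option linter.unusedSectionVars false
set_option linter.unusedSimpArgs false
variable {σ : Type*} [Fintype σ] [DecidableEq σ]

/-- Hypotheses on the killed variables `K` and the indices `P` of the binomials. -/
structure GoodSys (u v y z : ℕ → σ) (K : Finset σ) (P : Finset ℕ) : Prop where
  uK : ∀ a ∈ P, u a ∉ K
  vK : ∀ a ∈ P, v a ∉ K
  yK : ∀ a ∈ P, y a ∉ K
  zK : ∀ a ∈ P, z a ∉ K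
  yy : ∀ a ∈ P, ∀ b ∈ P, y a = y b → a = b
  zz : ∀ a ∈ P, ∀ b ∈ P, z a = z b → a = b
  uu : ∀ a ∈ P, ∀ b ∈ P, u a = u b → a = b
  yz : ∀ a ∈ P, ∀ b ∈ P, y a ≠ z b
  uy : ∀ a ∈ P, ∀ b ∈ P, u a ≠ y b
  uz : ∀ a ∈ P, ∀ b ∈ P, u a ≠ z b
  vy : ∀ a ∈ P, ∀ b ∈ P, v a ≠ y b
  vz : ∀ a ∈ P, ∀ b ∈ P, v a ≠ z b
  uv : ∀ a ∈ P, ∀ b ∈ P, u a = v b → b < a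

lemma GoodSys.mono {u v y z : ℕ → σ} {K K' : Finset σ} {P P' : Finset ℕ}
    (h : GoodSys u v y z K P) (hK : K' ⊆ K) (hP : P' ⊆ P) : GoodSys u v y z K' P' where
  uK a ha hk := h.uK a (hP ha) (hK hk)
  vK a ha hk := h.vK a (hP ha) (hK hk)
  yK a ha hk := h.yK a (hP ha) (hK hk)
  zK a ha hk := h.zK a (hP ha) (hK hk)
  yy a ha b hb := h.yy a (hP ha) b (hP hb)
  zz a ha b hb := h.zz a (hP ha) b (hP hb)
  uu a ha b hb := h.uu a (hP ha) b (hP hb)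
  yz a ha b hb := h.yz a (hP ha) b (hP hb)
  uy a ha b hb := h.uy a (hP ha) b (hP hb)
  uz a ha b hb := h.uz a (hP ha) b (hP hb)
  vy a ha b hb := h.vy a (hP ha) b (hP hb)
  vz a ha b hb := h.vz a (hP ha) b (hP hb)
  uv a ha b hb := h.uv a (hP ha) b (hP hb)

/-- The binomial `u y + z v`. -/
noncomputable def bin (u v y z : ℕ → σ) (a : ℕ) : MvPolynomial σ ℂ :=
  X (u a) * X (y a) + X (z a) * X (v a)

open Classical in
/-- The generators. -/
noncomputable def gens (u v y z : ℕ → σ) (K : Finset σ) (P : Finset ℕ) :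
    Finset (MvPolynomial σ ℂ) :=
  K.image X ∪ P.image (bin u v y z)

/-- Exponent vector of the image of a variable. -/
noncomputable def wt (u v y z : ℕ → σ) (P : Finset ℕ) (s : σ) : σ →₀ ℕ :=
  (if s ∈ P.image z then 0 else Finsupp.single s 1) +
    ∑ a ∈ P, ((if s = y a then Finsupp.single (v a) 1 else 0) +
      (if s = z a then Finsupp.single (u a) 1 + Finsupp.single (y a) 1 else 0))

/-- Sign of the image of a variable. -/
noncomputable def sg (z : ℕ → σ) (K : Finset σ) (P : Finset ℕ) (s : σ) : ℂ :=
  if s ∈ K then 0 else if s ∈ P.image z then -1 else 1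

/-- The parametrisation. -/
noncomputable def par (u v y z : ℕ → σ) (K : Finset σ) (P : Finset ℕ) :
    MvPolynomial σ ℂ →ₐ[ℂ] MvPolynomial σ ℂ :=
  aeval (fun s => monomial (wt u v y z P s) (sg z K P s))

/-- Exponent map of the parametrisation. -/
noncomputable def Ph (u v y z : ℕ → σ) (P : Finset ℕ) (e : σ →₀ ℕ) : σ →₀ ℕ :=
  ∑ s, e s • wt u v y z P s

/-- Normal exponent vectors. -/
def Nrm (u y : ℕ → σ) (K : Finset σ) (P : Finset ℕ) (e : σ →₀ ℕ) : Prop :=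
  (∀ s ∈ K, e s = 0) ∧ ∀ a ∈ P, e (u a) = 0 ∨ e (y a) = 0

variable {u v y z : ℕ → σ} {K : Finset σ} {P : Finset ℕ}

lemma Ph_apply (e : σ →₀ ℕ) (t : σ) :
    Ph u v y z P e t = (if t ∈ P.image z then 0 else e t) +
      ∑ a ∈ P, (e (y a) * (if v a = t then 1 else 0) +
        e (z a) * ((if u a = t then 1 else 0) + (if y a = t then 1 else 0))) := by
  have h1 : ∀ s, wt u v y z P s t = (if s = t then (if t ∈ P.image z then 0 else 1) else 0) +
    ∑ a ∈ P, ((if s = y a then (if v a = t then 1 else 0) else 0) +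
      (if s = z a then ((if u a = t then 1 else 0) + (if y a = t then 1 else 0)) else 0)) := by
    intro s
    unfold wt
    rw [Finsupp.add_apply, Finsupp.finsetSum_apply]
    congr 1
    · split_ifs <;> simp_all [Finsupp.single_apply]
    · refine Finset.sum_congr rfl fun a _ => ?_
      rw [Finsupp.add_apply]
      congr 1 <;> split_ifs <;> simp_all [Finsupp.single_apply]
  unfold Ph
  rw [Finsupp.finsetSum_apply]
  simp only [Finsupp.smul_apply, h1, smul_eq_mul, mul_add, Finset.sum_add_distrib, Finset.mul_sum]
  congr 1
  · simp
  · rw [Finset.sum_comm, Finset.sum_comm (s := Finset.univ)]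
    simp [mul_add, Finset.sum_add_distrib]

lemma Ph_inj (h : GoodSys u v y z K P) {e e' : σ →₀ ℕ} (he : Nrm u y K P e)
    (he' : Nrm u y K P e') (hh : Ph u v y z P e = Ph u v y z P e') : e = e' := by
  have H : ∀ t, _ := fun t => by
    have := DFunLike.congr_fun hh t
    rw [Ph_apply, Ph_apply] at this
    exact this
  have Hy : ∀ a ∈ P, e (y a) + e (z a) = e' (y a) + e' (z a) := by
    intro a ha
    have key : ∀ f : σ →₀ ℕ, (if y a ∈ P.image z then 0 else f (y a)) +
      ∑ b ∈ P, (f (y b) * (if v b = y a then 1 else 0) +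
        f (z b) * ((if u b = y a then 1 else 0) + (if y b = y a then 1 else 0)))
        = f (y a) + f (z a) := by
      intro f
      rw [if_neg, Finset.sum_eq_single a]
      · simp [h.vy a ha a ha, h.uy a ha a ha]
      · intro b hb hba
        have : y b ≠ y a := fun hy => hba (h.yy b hb a ha hy)
        simp [h.vy b hb a ha, h.uy b hb a ha, this]
      · exact fun hn => absurd ha hn
      · intro hm
        obtain ⟨b, hb, hbz⟩ := Finset.mem_image.1 hm
        exact h.yz a ha b hb hbz.symm
    have := H (y a)
    rwa [key, key] at this
  have Hu : ∀ a ∈ P, e (u a) + e (z a) + ∑ b ∈ P, (if v b = u a then e (y b) else 0)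
      = e' (u a) + e' (z a) + ∑ b ∈ P, (if v b = u a then e' (y b) else 0) := by
    intro a ha
    have key : ∀ f : σ →₀ ℕ, (if u a ∈ P.image z then 0 else f (u a)) +
      ∑ b ∈ P, (f (y b) * (if v b = u a then 1 else 0) +
        f (z b) * ((if u b = u a then 1 else 0) + (if y b = u a then 1 else 0)))
        = f (u a) + f (z a) + ∑ b ∈ P, (if v b = u a then f (y b) else 0) := by
      intro f
      rw [if_neg, Finset.sum_add_distrib,
        Finset.sum_eq_single (f := fun b => f (z b) * _) a]
      · simp [(h.uy a ha a ha).symm]; ring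
      · intro b hb hba
        have : u b ≠ u a := fun hy => hba (h.uu b hb a ha hy)
        simp [this, (h.uy a ha b hb).symm]
      · exact fun hn => absurd ha hn
      · intro hm
        obtain ⟨b, hb, hbz⟩ := Finset.mem_image.1 hm
        exact h.uz a ha b hb hbz.symm
    have := H (u a)
    rwa [key, key] at this
  have Hall : ∀ a, a ∈ P → e (y a) = e' (y a) ∧ e (z a) = e' (z a) := by
    intro a
    induction a using Nat.strong_induction_on with
    | _ a ih =>
      intro ha
      have h1 := Hu a ha
      have h2 : ∑ b ∈ P, (if v b = u a then e (y b) else 0)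
          = ∑ b ∈ P, (if v b = u a then e' (y b) else 0) := by
        refine Finset.sum_congr rfl fun b hb => ?_
        split_ifs with hv
        · exact (ih b (h.uv a ha b hb hv.symm) hb).1
        · rfl
      have h3 := Hy a ha
      have h4 := he.2 a ha
      have h5 := he'.2 a ha
      omega
  ext t
  by_cases ht : t ∈ P.image z
  · obtain ⟨a, ha, rfl⟩ := Finset.mem_image.1 ht
    exact (Hall a ha).2
  · have := H t
    rw [if_neg ht, if_neg ht] at this
    have h2 : ∀ (x y : ℕ), x = y → e t + x = e' t + y → e t = e' t := by omega
    refine h2 _ _ ?_ this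
    refine Finset.sum_congr rfl fun a ha => ?_
    rw [(Hall a ha).1, (Hall a ha).2]

lemma par_monomial (e : σ →₀ ℕ) (c : ℂ) :
    par u v y z K P (monomial e c) =
      monomial (Ph u v y z P e) (c * ∏ s, sg z K P s ^ e s) := by
  have aux : ∀ T : Finset σ, ∏ s ∈ T, monomial (wt u v y z P s) (sg z K P s) ^ e s =
      monomial (∑ s ∈ T, e s • wt u v y z P s) (∏ s ∈ T, sg z K P s ^ e s) := by
    intro T
    induction T using Finset.induction_on with
    | empty => simp
    | insert a T ha ih =>
      rw [Finset.prod_insert ha, Finset.prod_insert ha, Finset.sum_insert ha, ih, monomial_pow,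
        monomial_mul]
  unfold par Ph
  rw [aeval_monomial, Finsupp.prod_fintype _ _ (by simp), aux, algebraMap_eq, C_mul_monomial]

lemma par_inj (h : GoodSys u v y z K P) (g : MvPolynomial σ ℂ)
    (hg : ∀ e ∈ g.support, Nrm u y K P e) (h0 : par u v y z K P g = 0) : g = 0 := by
  by_contra hne
  obtain ⟨e, he⟩ := Finset.nonempty_iff_ne_empty.2 (fun hs => hne (support_eq_empty.1 hs))
  have h1 : coeff (Ph u v y z P e) (par u v y z K P g) = 0 := by rw [h0, coeff_zero]
  conv at h1 => lhs; rw [as_sum g]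
  rw [map_sum, coeff_sum, Finset.sum_eq_single e] at h1
  · rw [par_monomial, coeff_monomial, if_pos rfl] at h1
    rcases mul_eq_zero.1 h1 with h2 | h2
    · exact mem_support_iff.1 he h2
    · obtain ⟨s, _, hs⟩ := Finset.prod_eq_zero_iff.1 h2
      have hes : e s ≠ 0 := by
        intro h3; simp [h3] at hs
      have hsK : s ∉ K := fun hk => hes ((hg e he).1 s hk)
      have := pow_eq_zero_iff hes |>.1 hs
      unfold sg at this
      rw [if_neg hsK] at this
      split_ifs at this <;> norm_num at this
  · intro e' he' hne'
    rw [par_monomial, coeff_monomial, if_neg]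
    exact fun hp => hne' (Ph_inj h (hg e' he') (hg e he) hp)
  · exact fun hn => absurd he hn

lemma par_X (s : σ) : par u v y z K P (X s) = monomial (wt u v y z P s) (sg z K P s) := by
  simp [par]

lemma par_bin (h : GoodSys u v y z K P) (a : ℕ) (ha : a ∈ P) :
    par u v y z K P (bin u v y z a) = 0 := by
  have nz : ∀ s, (∀ b ∈ P, s ≠ z b) → s ∉ P.image z := by
    intro s hs hm
    obtain ⟨b, hb, hbz⟩ := Finset.mem_image.1 hm
    exact hs b hb hbz.symm
  have hzm : z a ∈ P.image z := Finset.mem_image_of_mem _ ha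
  have wu : wt u v y z P (u a) = Finsupp.single (u a) 1 := by
    unfold wt
    rw [if_neg (nz _ (h.uz a ha)), Finset.sum_eq_zero, add_zero]
    intro b hb
    rw [if_neg (h.uy a ha b hb), if_neg (h.uz a ha b hb), add_zero]
  have wv : wt u v y z P (v a) = Finsupp.single (v a) 1 := by
    unfold wt
    rw [if_neg (nz _ (h.vz a ha)), Finset.sum_eq_zero, add_zero]
    intro b hb
    rw [if_neg (h.vy a ha b hb), if_neg (h.vz a ha b hb), add_zero]
  have wy : wt u v y z P (y a) = Finsupp.single (y a) 1 + Finsupp.single (v a) 1 := by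
    unfold wt
    rw [if_neg (nz _ (h.yz a ha)), Finset.sum_eq_single a]
    · rw [if_pos rfl, if_neg (h.yz a ha a ha), add_zero]
    · intro b hb hba
      rw [if_neg (fun hh => hba (h.yy a ha b hb hh).symm), if_neg (h.yz a ha b hb), add_zero]
    · exact fun hn => absurd ha hn
  have wz : wt u v y z P (z a) = Finsupp.single (u a) 1 + Finsupp.single (y a) 1 := by
    unfold wt
    rw [if_pos hzm, Finset.sum_eq_single a]
    · rw [if_pos rfl, if_neg (h.yz a ha a ha).symm, zero_add, zero_add]
    · intro b hb hba
      rw [if_neg (fun hh => hba (h.zz a ha b hb hh).symm), if_neg (h.yz b hb a ha).symm, add_zero]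
    · exact fun hn => absurd ha hn
  have su : sg z K P (u a) = 1 := by
    unfold sg; rw [if_neg (h.uK a ha), if_neg (nz _ (h.uz a ha))]
  have sv : sg z K P (v a) = 1 := by
    unfold sg; rw [if_neg (h.vK a ha), if_neg (nz _ (h.vz a ha))]
  have sy : sg z K P (y a) = 1 := by
    unfold sg; rw [if_neg (h.yK a ha), if_neg (nz _ (h.yz a ha))]
  have sz : sg z K P (z a) = -1 := by
    unfold sg; rw [if_neg (h.zK a ha), if_pos hzm]
  unfold bin
  rw [map_add, map_mul, map_mul, par_X, par_X, par_X, par_X, wu, wv, wy, wz, su, sv, sy, sz,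
    monomial_mul, monomial_mul, ← add_assoc, ← map_add]
  simp

lemma exists_normal_monomial (c : ℂ) (N : ℕ) : ∀ e : σ →₀ ℕ, ∀ _ : ∑ a ∈ P, e (y a) ≤ N,
    GoodSys u v y z K P →
    ∃ g, monomial e c - g ∈ Ideal.span (gens u v y z K P : Set (MvPolynomial σ ℂ)) ∧
      ∀ e ∈ g.support, Nrm u y K P e := by
  classical
  induction N generalizing c with
  | zero =>
    intro e he h
    by_cases hn : Nrm u y K P e
    · refine ⟨monomial e c, by simp, fun e' he' => ?_⟩
      have := support_monomial_subset he'
      rw [Finset.mem_singleton] at this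
      exact this ▸ hn
    · have hy : ∀ a ∈ P, e (y a) = 0 := by
        intro a ha
        have := Finset.single_le_sum (f := fun a => e (y a)) (fun _ _ => Nat.zero_le _) ha
        omega
      have : ∃ s ∈ K, e s ≠ 0 := by
        by_contra hcon
        push Not at hcon
        exact hn ⟨hcon, fun a ha => Or.inr (hy a ha)⟩
      obtain ⟨s, hs, hes⟩ := this
      refine ⟨0, ?_, by simp⟩
      rw [sub_zero]
      refine Ideal.mem_of_dvd _ (a := X s) ?_ (Ideal.subset_span ?_)
      · rw [X_dvd_monomial]; exact Or.inr hes
      · simp only [gens, Finset.coe_union, Finset.coe_image]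
        exact Or.inl ⟨s, hs, rfl⟩
  | succ N ih =>
    intro e he h
    by_cases hK : ∃ s ∈ K, e s ≠ 0
    · obtain ⟨s, hs, hes⟩ := hK
      refine ⟨0, ?_, by simp⟩
      rw [sub_zero]
      refine Ideal.mem_of_dvd _ (a := X s) ?_ (Ideal.subset_span ?_)
      · rw [X_dvd_monomial]; exact Or.inr hes
      · simp only [gens, Finset.coe_union, Finset.coe_image]
        exact Or.inl ⟨s, hs, rfl⟩
    by_cases hn : Nrm u y K P e
    · refine ⟨monomial e c, by simp, fun e' he' => ?_⟩
      have := support_monomial_subset he'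
      rw [Finset.mem_singleton] at this
      exact this ▸ hn
    · push Not at hK
      have : ∃ a ∈ P, e (u a) ≠ 0 ∧ e (y a) ≠ 0 := by
        by_contra hcon
        push Not at hcon
        refine hn ⟨hK, fun a ha => ?_⟩
        by_cases h0 : e (u a) = 0
        · exact Or.inl h0
        · exact Or.inr (hcon a ha h0)
      obtain ⟨a, ha, hu, hy⟩ := this
      have huy := h.uy a ha a ha
      have hle : Finsupp.single (u a) 1 + Finsupp.single (y a) 1 ≤ e := by
        intro s
        rw [Finsupp.add_apply, Finsupp.single_apply, Finsupp.single_apply]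
        split_ifs with h1 h2 h2
        · exact absurd (h1.trans h2.symm) huy
        · subst h1; omega
        · subst h2; omega
        · omega
      obtain ⟨d, rfl⟩ := exists_add_of_le hle
      have hlt : ∑ b ∈ P, (d + (Finsupp.single (z a) 1 + Finsupp.single (v a) 1) : σ →₀ ℕ) (y b) ≤ N := by
        have h1 : ∑ b ∈ P, (d + (Finsupp.single (z a) 1 + Finsupp.single (v a) 1) : σ →₀ ℕ) (y b)
            = ∑ b ∈ P, d (y b) := by
          refine Finset.sum_congr rfl fun b hb => ?_
          rw [Finsupp.add_apply, Finsupp.add_apply, Finsupp.single_apply, Finsupp.single_apply,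
            if_neg (h.yz b hb a ha).symm, if_neg (h.vy a ha b hb)]
          rfl
        have h2 : ∑ b ∈ P, d (y b) <
            ∑ b ∈ P, (Finsupp.single (u a) 1 + Finsupp.single (y a) 1 + d : σ →₀ ℕ) (y b) := by
          refine Finset.sum_lt_sum (fun b _ => ?_) ⟨a, ha, ?_⟩
          · rw [Finsupp.add_apply]; omega
          · rw [Finsupp.add_apply, Finsupp.add_apply, Finsupp.single_apply (a := y a),
              if_pos rfl]; omega
        omega
      obtain ⟨g, hg, hg'⟩ := ih (-c) _ hlt h
      refine ⟨g, ?_, hg'⟩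
      have hb : bin u v y z a ∈ Ideal.span (gens u v y z K P : Set (MvPolynomial σ ℂ)) := by
        refine Ideal.subset_span ?_
        simp only [gens, Finset.coe_union, Finset.coe_image]
        exact Or.inr ⟨a, ha, rfl⟩
      have := Ideal.add_mem _ hg (Ideal.mul_mem_left _ (monomial d c) hb)
      convert this using 1
      have e1 : (monomial d c : MvPolynomial σ ℂ) * bin u v y z a =
          monomial (Finsupp.single (u a) 1 + Finsupp.single (y a) 1 + d) c +
          monomial (d + (Finsupp.single (z a) 1 + Finsupp.single (v a) 1)) c := by
        unfold bin X
        rw [monomial_mul, monomial_mul, mul_add, monomial_mul, monomial_mul, add_comm d]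
        simp
      rw [e1, map_neg]
      ring

lemma exists_normal (h : GoodSys u v y z K P) (f : MvPolynomial σ ℂ) :
    ∃ g, f - g ∈ Ideal.span (gens u v y z K P : Set (MvPolynomial σ ℂ)) ∧
      ∀ e ∈ g.support, Nrm u y K P e := by
  classical
  induction f using MvPolynomial.induction_on' with
  | monomial e c => exact exists_normal_monomial c _ e le_rfl h
  | add p q hp hq =>
    obtain ⟨g, hg, hg'⟩ := hp
    obtain ⟨k, hk, hk'⟩ := hq
    refine ⟨g + k, ?_, fun e he => ?_⟩
    · convert Ideal.add_mem _ hg hk using 1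
      ring
    · rcases Finset.mem_union.1 (support_add he) with h1 | h1
      · exact hg' e h1
      · exact hk' e h1

lemma gens_le_ker (h : GoodSys u v y z K P) :
    Ideal.span (gens u v y z K P : Set (MvPolynomial σ ℂ)) ≤
      RingHom.ker (par u v y z K P) := by
  classical
  rw [Ideal.span_le]
  intro b hb
  simp only [gens, Finset.coe_union, Finset.coe_image] at hb
  rcases hb with ⟨s, hs, rfl⟩ | ⟨a, ha, rfl⟩
  · change par u v y z K P (X s) = 0
    rw [par_X, sg, if_pos (by exact hs), map_zero]
  · exact par_bin h a ha

theorem gens_prime (h : GoodSys u v y z K P) :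
    (Ideal.span (gens u v y z K P : Set (MvPolynomial σ ℂ))).IsPrime := by
  have : Ideal.span (gens u v y z K P : Set (MvPolynomial σ ℂ)) =
      RingHom.ker (par u v y z K P) := by
    refine le_antisymm (gens_le_ker h) fun f hf => ?_
    obtain ⟨g, hg, hg'⟩ := exists_normal h f
    have h1 : par u v y z K P g = 0 := by
      have := gens_le_ker h hg
      rw [RingHom.mem_ker, map_sub, RingHom.mem_ker.1 hf, zero_sub, neg_eq_zero] at this
      exact this
    rw [par_inj h g hg' h1, sub_zero] at hg
    exact hg
  rw [this]
  exact RingHom.ker_isPrime _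

theorem sub_gens_prime (h : GoodSys u v y z K P) (C : Finset (MvPolynomial σ ℂ))
    (hC : C ⊆ gens u v y z K P) :
    (Ideal.span (C : Set (MvPolynomial σ ℂ))).IsPrime := by
  classical
  have : C = gens u v y z (K.filter (fun s => (X s : MvPolynomial σ ℂ) ∈ C))
      (P.filter (fun a => bin u v y z a ∈ C)) := by
    ext b
    simp only [gens, Finset.mem_union, Finset.mem_image, Finset.mem_filter]
    constructor
    · intro hb
      have := hC hb
      simp only [gens, Finset.mem_union, Finset.mem_image] at this
      rcases this with ⟨s, hs, rfl⟩ | ⟨a, ha, rfl⟩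
      · exact Or.inl ⟨s, ⟨hs, hb⟩, rfl⟩
      · exact Or.inr ⟨a, ⟨ha, hb⟩, rfl⟩
    · rintro (⟨s, ⟨hs, hb⟩, rfl⟩ | ⟨a, ⟨ha, hb⟩, rfl⟩) <;> exact hb
  rw [this]
  exact gens_prime (h.mono (Finset.filter_subset _ _) (Finset.filter_subset _ _))

/-- Each generator is separated from the others by a point. -/
theorem gens_sep (h : GoodSys u v y z K P) (b : MvPolynomial σ ℂ) (hb : b ∈ gens u v y z K P) :
    ∃ q : σ → ℂ, eval q b ≠ 0 ∧ ∀ c ∈ gens u v y z K P, c ≠ b → eval q c = 0 := by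
  classical
  simp only [gens, Finset.mem_union, Finset.mem_image] at hb
  rcases hb with ⟨s, hs, rfl⟩ | ⟨a, ha, rfl⟩
  · refine ⟨fun t => if t = s then 1 else 0, by simp, fun c hc hne => ?_⟩
    simp only [gens, Finset.mem_union, Finset.mem_image] at hc
    rcases hc with ⟨t, ht, rfl⟩ | ⟨a, ha, rfl⟩
    · rw [eval_X, if_neg]
      rintro rfl; exact hne rfl
    · have h1 : u a ≠ s := fun hh => h.uK a ha (hh ▸ hs)
      have h2 : v a ≠ s := fun hh => h.vK a ha (hh ▸ hs)
      simp [bin, h1, h2]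
  · refine ⟨fun t => if t = u a ∨ t = y a then 1 else 0, ?_, fun c hc hne => ?_⟩
    · simp [bin, (h.uz a ha a ha).symm, (h.yz a ha a ha).symm]
    simp only [gens, Finset.mem_union, Finset.mem_image] at hc
    rcases hc with ⟨t, ht, rfl⟩ | ⟨b, hb, rfl⟩
    · rw [eval_X, if_neg]
      rintro (rfl | rfl)
      · exact h.uK a ha ht
      · exact h.yK a ha ht
    · have hba : b ≠ a := by rintro rfl; exact hne rfl
      have h1 : y b ≠ y a := fun hh => hba (h.yy b hb a ha hh)
      simp [bin, (h.uz a ha b hb).symm, (h.yz a ha b hb).symm, h1, (h.uy a ha b hb).symm]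

theorem notMem_span (h : GoodSys u v y z K P) (C : Finset (MvPolynomial σ ℂ))
    (hC : C ⊆ gens u v y z K P) (b : MvPolynomial σ ℂ) (hb : b ∈ gens u v y z K P)
    (hbC : b ∉ C) : b ∉ Ideal.span (C : Set (MvPolynomial σ ℂ)) := by
  obtain ⟨q, hq, hq'⟩ := gens_sep h b hb
  have : Ideal.span (C : Set (MvPolynomial σ ℂ)) ≤ RingHom.ker (eval q) := by
    rw [Ideal.span_le]
    intro c hc
    exact hq' c (hC hc) (by rintro rfl; exact hbC hc)
  exact fun hm => hq (this hm)

theorem height_ge (h : GoodSys u v y z K P) (C : Finset (MvPolynomial σ ℂ)) :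
    C ⊆ gens u v y z K P → (C.card : ℕ∞) ≤ (Ideal.span (C : Set (MvPolynomial σ ℂ))).height := by
  classical
  induction C using Finset.induction_on with
  | empty => simp
  | insert b C hb ih =>
    intro hC
    have hC' := (Finset.subset_insert b C).trans hC
    have p1 := sub_gens_prime h C hC'
    have p2 := sub_gens_prime h _ hC
    have hlt : Ideal.span (C : Set (MvPolynomial σ ℂ)) <
        Ideal.span ((insert b C : Finset _) : Set (MvPolynomial σ ℂ)) := by
      refine lt_of_le_of_ne (Ideal.span_mono (by simp)) fun heq => ?_
      refine notMem_span h C hC' b (hC (Finset.mem_insert_self _ _)) hb ?_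
      rw [heq]
      exact Ideal.subset_span (by simp)
    have := Ideal.height_add_one_le_of_lt_of_isPrime hlt
    rw [Finset.card_insert_of_notMem hb]
    rw [Nat.cast_add, Nat.cast_one]
    exact le_trans (add_le_add_left (ih hC') 1) this

theorem dim_le (h : GoodSys u v y z K P) (C : Finset (MvPolynomial σ ℂ)) :
    C ⊆ gens u v y z K P →
    ringKrullDim (MvPolynomial σ ℂ ⧸ Ideal.span (C : Set (MvPolynomial σ ℂ))) + C.card
      ≤ Fintype.card σ := by
  classical
  induction C using Finset.induction_on with
  | empty =>
    intro _
    have := ringKrullDim_quotient_le (Ideal.span ((∅ : Finset (MvPolynomial σ ℂ)) : Set (MvPolynomial σ ℂ)))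
    refine le_trans (by simpa using this) ?_
    simp
  | insert b C hb ih =>
    intro hC
    have hC' := (Finset.subset_insert b C).trans hC
    have p1 := sub_gens_prime h C hC'
    have hle : Ideal.span (C : Set (MvPolynomial σ ℂ)) ≤
        Ideal.span ((insert b C : Finset _) : Set (MvPolynomial σ ℂ)) :=
      Ideal.span_mono (by simp)
    have hnb := notMem_span h C hC' b (hC (Finset.mem_insert_self _ _)) hb
    have := ringKrullDim_succ_le_of_surjective (Ideal.Quotient.factor hle)
      (Ideal.Quotient.factor_surjective hle)
      (r := Ideal.Quotient.mk _ b) (by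
        rw [mem_nonZeroDivisors_iff_ne_zero, Ne, Ideal.Quotient.eq_zero_iff_mem]
        exact hnb) (by
        rw [Ideal.Quotient.factor_mk, Ideal.Quotient.eq_zero_iff_mem]
        exact Ideal.subset_span (by simp))
    rw [Finset.card_insert_of_notMem hb]
    refine le_trans ?_ (ih hC')
    push_cast
    rw [add_comm (C.card : WithBot ℕ∞) 1, ← add_assoc]
    gcongr

theorem dim_ge (C : Finset (MvPolynomial σ ℂ)) (hC : ∀ c ∈ C, eval (0 : σ → ℂ) c = 0) :
    (Fintype.card σ : WithBot ℕ∞) ≤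
    ringKrullDim (MvPolynomial σ ℂ ⧸ Ideal.span (C : Set (MvPolynomial σ ℂ))) + C.card := by
  classical
  set m : Ideal (MvPolynomial σ ℂ) := RingHom.ker (eval (0 : σ → ℂ)) with hm
  have : m.IsPrime := RingHom.ker_isPrime _
  have h1 := Ideal.height_le_ringKrullDim_quotient_add_encard (p := m)
    (C : Set (MvPolynomial σ ℂ)) (fun c hc => hC c hc)
  rw [Set.encard_coe_eq_coe_finsetCard] at h1
  refine le_trans ?_ h1
  by_cases hσ : IsEmpty σ
  · simp
  rw [not_isEmpty_iff] at hσ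
  obtain ⟨s0⟩ := hσ
  have hG : GoodSys (fun _ => s0) (fun _ => s0) (fun _ => s0) (fun _ => s0)
    (Finset.univ : Finset σ) ∅ := by
    constructor <;> simp
  have h2 := height_ge hG (gens (fun _ => s0) (fun _ => s0) (fun _ => s0) (fun _ => s0)
    (Finset.univ : Finset σ) ∅) subset_rfl
  have h3 : (gens (fun _ => s0) (fun _ => s0) (fun _ => s0) (fun _ => s0)
    (Finset.univ : Finset σ) ∅).card = Fintype.card σ := by
    simp only [gens, Finset.image_empty, Finset.union_empty]
    rw [Finset.card_image_of_injective _ (X_injective), Finset.card_univ]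
  rw [h3] at h2
  have h4 : (Fintype.card σ : ℕ∞) ≤ m.height := by
    refine h2.trans (Ideal.height_mono ?_)
    rw [Ideal.span_le]
    intro c hc
    simp only [gens, Finset.image_empty, Finset.union_empty, Finset.coe_image] at hc
    obtain ⟨s, _, rfl⟩ := hc
    change eval (0 : σ → ℂ) (X s) = 0
    simp
  exact_mod_cast h4

theorem core (h : GoodSys u v y z K P) (B : Finset (MvPolynomial σ ℂ))
    (hB : B ⊆ gens u v y z K P) :
    (Ideal.span (B : Set (MvPolynomial σ ℂ))).IsPrime ∧
    (∀ B' ⊂ B, Ideal.span (B' : Set (MvPolynomial σ ℂ)) ≠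
        Ideal.span (B : Set (MvPolynomial σ ℂ))) ∧
    ringKrullDim (MvPolynomial σ ℂ ⧸ Ideal.span (B : Set (MvPolynomial σ ℂ))) =
      (Fintype.card σ - B.card : ℕ) := by
  classical
  have hp := sub_gens_prime h B hB
  refine ⟨hp, fun B' hB' heq => ?_, ?_⟩
  · obtain ⟨hs, b, hb, hb'⟩ := Finset.ssubset_iff_exists_subset_erase.1 hB' |>.elim
      fun b hb => (⟨hB'.1, b, hb.1, fun hm => Finset.notMem_erase b B (hb.2 hm)⟩ :
        B' ⊆ B ∧ ∃ b, b ∈ B ∧ b ∉ B')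
    refine notMem_span h B' (hs.trans hB) b (hB hb) hb' ?_
    rw [heq]
    exact Ideal.subset_span hb
  · have h1 := dim_le h B hB
    have h2 := dim_ge B (by
      intro c hc
      have := hB hc
      simp only [gens, Finset.mem_union, Finset.mem_image] at this
      rcases this with ⟨s, hs, rfl⟩ | ⟨a, ha, rfl⟩ <;> simp [bin])
    have h3 := le_antisymm h1 h2
    have : Nontrivial (MvPolynomial σ ℂ ⧸ Ideal.span (B : Set (MvPolynomial σ ℂ))) :=
      Ideal.Quotient.nontrivial_iff.2 hp.ne_top
    obtain ⟨d, hd⟩ : ∃ d : ℕ∞,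
        ringKrullDim (MvPolynomial σ ℂ ⧸ Ideal.span (B : Set (MvPolynomial σ ℂ))) = d :=
      (WithBot.ne_bot_iff_exists.1 (ne_of_gt (lt_of_lt_of_le (WithBot.bot_lt_coe _) ringKrullDim_nonneg_of_nontrivial))).imp fun _ h => h.symm
    rw [hd] at h3 ⊢
    have h4 : d + (B.card : ℕ∞) = (Fintype.card σ : ℕ∞) := by exact_mod_cast h3
    have h5 : d ≠ ⊤ := by
      rintro rfl
      rw [top_add] at h4
      exact ENat.natCast_ne_top _ h4.symm
    lift d to ℕ using h5
    have h6 : d + B.card = Fintype.card σ := by exact_mod_cast h4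
    have h7 : d = Fintype.card σ - B.card := by omega
    rw [← h7]
    rfl
end Core

/-- The index of the variable `x_i`. -/
def ixv (n i : ℕ) : Fin (2 * n + 1) := ⟨(i - 1) % (2 * n + 1), Nat.mod_lt _ (by omega)⟩

lemma xv_eq_s4 (n i : ℕ) : xv n i = X (ixv n i) := rfl

lemma pv_eq_s4 (n a : ℕ) : pv n a =
    bin (fun a => ixv n (a - 2)) (fun a => ixv n (a + 2)) (fun a => ixv n (a - 1))
      (fun a => ixv n (a + 1)) a := rfl

lemma ixv_inj {n i j : ℕ} (hi : 1 ≤ i) (hi' : i ≤ 2 * n + 1) (hj : 1 ≤ j) (hj' : j ≤ 2 * n + 1)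
    (h : ixv n i = ixv n j) : i = j := by
  have := congrArg Fin.val h
  simp only [ixv] at this
  rw [Nat.mod_eq_of_lt (by omega), Nat.mod_eq_of_lt (by omega)] at this
  omega

/-- Indices `a` for which `p_a` can occur. -/
def PG (S : Finset ℕ) : Finset ℕ := S.filter (fun a => a - 2 ∉ S ∧ a + 2 ∉ S)

/-- Indices `i` for which `x_i` can occur. -/
def KG (n : ℕ) (S : Finset ℕ) : Finset ℕ :=
  (Finset.Icc 1 (2 * n + 1)).filter
    (fun i => ∀ a ∈ PG S, i ≠ a - 2 ∧ i ≠ a - 1 ∧ i ≠ a + 1 ∧ i ≠ a + 2)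

lemma PG_bounds {n : ℕ} {S : Finset ℕ} (hS : S ⊆ Aset' n) {a : ℕ} (ha : a ∈ PG S) :
    a ∈ S ∧ a - 2 ∉ S ∧ a + 2 ∉ S ∧ a % 2 = 1 ∧ 3 ≤ a ∧ a < 2 * n := by
  have h1 := Finset.mem_filter.1 ha
  have h2 := hS h1.1
  simp only [Aset', Finset.mem_filter, Finset.mem_range] at h2
  exact ⟨h1.1, h1.2.1, h1.2.2, h2.2.1, h2.2.2, h2.1⟩

lemma good_concrete {n : ℕ} {S : Finset ℕ} (hS : S ⊆ Aset' n) :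
    GoodSys (fun a => ixv n (a - 2)) (fun a => ixv n (a + 2)) (fun a => ixv n (a - 1))
      (fun a => ixv n (a + 1)) ((KG n S).image (ixv n)) (PG S) := by
  have hK : ∀ i, 1 ≤ i → i ≤ 2 * n + 1 →
      (∃ a ∈ PG S, i = a - 2 ∨ i = a - 1 ∨ i = a + 1 ∨ i = a + 2) →
      ixv n i ∉ (KG n S).image (ixv n) := by
    rintro i h1 h2 ⟨a, ha, hi⟩ hm
    obtain ⟨j, hj, hji⟩ := Finset.mem_image.1 hm
    simp only [KG, Finset.mem_filter, Finset.mem_Icc] at hj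
    have := ixv_inj hj.1.1 hj.1.2 h1 h2 hji
    have h3 := hj.2 a ha
    omega
  constructor
  · intro a ha
    obtain ⟨-, -, -, h4, h5, h6⟩ := PG_bounds hS ha
    exact hK _ (by omega) (by omega) ⟨a, ha, by omega⟩
  · intro a ha
    obtain ⟨-, -, -, h4, h5, h6⟩ := PG_bounds hS ha
    exact hK _ (by omega) (by omega) ⟨a, ha, by omega⟩
  · intro a ha
    obtain ⟨-, -, -, h4, h5, h6⟩ := PG_bounds hS ha
    exact hK _ (by omega) (by omega) ⟨a, ha, by omega⟩
  · intro a ha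
    obtain ⟨-, -, -, h4, h5, h6⟩ := PG_bounds hS ha
    exact hK _ (by omega) (by omega) ⟨a, ha, by omega⟩
  all_goals
    intro a ha b hb hab
    obtain ⟨a1, a2, a3, a4, a5, a6⟩ := PG_bounds hS ha
    obtain ⟨b1, b2, b3, b4, b5, b6⟩ := PG_bounds hS hb
    have hab' := ixv_inj (by omega) (by omega) (by omega) (by omega) hab
    first
    | omega
    | (exfalso
       have : a = b + 2 := by omega
       subst this
       exact b3 a1)
    | (exfalso
       have : b = a + 2 := by omega
       subst this
       exact a3 b1)

lemma subset_concrete {n : ℕ} (hn : 3 ≤ n) {S : Finset ℕ} (hS : IsFib n S)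
    {B : Finset (MvPolynomial (Fin (2 * n + 1)) ℂ)} (hB : IsAdmissible n S B) :
    B ⊆ gens (fun a => ixv n (a - 2)) (fun a => ixv n (a + 2)) (fun a => ixv n (a - 1))
      (fun a => ixv n (a + 1)) ((KG n S).image (ixv n)) (PG S) := by
  classical
  obtain ⟨hSA, hF⟩ := hS
  have hx : ∀ i, 1 ≤ i → i ≤ 2 * n + 1 →
      (∀ a ∈ PG S, i ≠ a - 2 ∧ i ≠ a - 1 ∧ i ≠ a + 1 ∧ i ≠ a + 2) →
      xv n i ∈ gens (fun a => ixv n (a - 2)) (fun a => ixv n (a + 2)) (fun a => ixv n (a - 1))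
      (fun a => ixv n (a + 1)) ((KG n S).image (ixv n)) (PG S) := by
    intro i h1 h2 h3
    refine Finset.mem_union_left _ (Finset.mem_image.2 ⟨ixv n i, Finset.mem_image_of_mem _ ?_, rfl⟩)
    simp only [KG, Finset.mem_filter, Finset.mem_Icc]
    exact ⟨⟨h1, h2⟩, h3⟩
  have hp : ∀ a, a ∈ S → a - 2 ∉ S → a + 2 ∉ S →
      pv n a ∈ gens (fun a => ixv n (a - 2)) (fun a => ixv n (a + 2)) (fun a => ixv n (a - 1))
      (fun a => ixv n (a + 1)) ((KG n S).image (ixv n)) (PG S) := by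
    intro a h1 h2 h3
    exact Finset.mem_union_right _
      (Finset.mem_image.2 ⟨a, Finset.mem_filter.2 ⟨h1, h2, h3⟩, rfl⟩)
  have hlow : ∀ i, i < 3 → i ∉ S := by
    intro i hi hm
    have := hSA hm
    simp only [Aset', Finset.mem_filter] at this
    omega
  have hhigh : ∀ i, 2 * n ≤ i → i ∉ S := by
    intro i hi hm
    have := hSA hm
    simp only [Aset', Finset.mem_filter, Finset.mem_range] at this
    omega
  have h12 : 5 ∈ S → ∀ i, (i = 1 ∨ i = 2) → ∀ a ∈ PG S,
      i ≠ a - 2 ∧ i ≠ a - 1 ∧ i ≠ a + 1 ∧ i ≠ a + 2 := by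
    intro h5 i hi a ha
    obtain ⟨a1, a2, a3, a4, a5, a6⟩ := PG_bounds hSA ha
    have : a ≠ 3 := by rintro rfl; exact a3 h5
    omega
  have hnn : 2 * n - 3 ∈ S → ∀ i, (i = 2 * n ∨ i = 2 * n + 1) → ∀ a ∈ PG S,
      i ≠ a - 2 ∧ i ≠ a - 1 ∧ i ≠ a + 1 ∧ i ≠ a + 2 := by
    intro h5 i hi a ha
    obtain ⟨a1, a2, a3, a4, a5, a6⟩ := PG_bounds hSA ha
    have : a ≠ 2 * n - 1 := by
      rintro rfl
      apply a2
      have : 2 * n - 1 - 2 = 2 * n - 3 := by omega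
      rwa [this]
    omega
  obtain ⟨V2, V3, hV2, hV3, rfl⟩ := hB
  intro b hb
  simp only [Finset.mem_union] at hb
  rcases hb with ((hb | hb) | hb) | hb
  · obtain ⟨i, hi, rfl⟩ := Finset.mem_image.1 hb
    have hi' := hSA hi
    simp only [Aset', Finset.mem_filter, Finset.mem_range] at hi'
    refine hx i (by omega) (by omega) fun a ha => ?_
    obtain ⟨a1, a2, a3, a4, a5, a6⟩ := PG_bounds hSA ha
    refine ⟨?_, by omega, by omega, ?_⟩
    · rintro rfl; exact a2 hi
    · rintro rfl; exact a3 hi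
  · rcases hV2 with ⟨h3, h5, rfl⟩ | ⟨h3, h5, rfl | rfl⟩ | ⟨h3, h5, rfl⟩
    · rw [Finset.mem_insert, Finset.mem_singleton] at hb
      rcases hb with rfl | rfl
      · exact hx 1 (by omega) (by omega) (h12 h5 1 (by omega))
      · exact hx 2 (by omega) (by omega) (h12 h5 2 (by omega))
    · rw [Finset.mem_singleton] at hb
      subst hb
      exact hx 1 (by omega) (by omega) (h12 h5 1 (by omega))
    · rw [Finset.mem_singleton] at hb
      subst hb
      exact hx 2 (by omega) (by omega) (h12 h5 2 (by omega))
    · rw [Finset.mem_singleton] at hb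
      subst hb
      exact hp 3 h3 (hlow _ (by omega)) h5
  · rcases hV3 with ⟨h3, h5, rfl⟩ | ⟨h5, h3, rfl | rfl⟩ | ⟨h3, h5, rfl⟩
    · rw [Finset.mem_insert, Finset.mem_singleton] at hb
      rcases hb with rfl | rfl
      · exact hx _ (by omega) (by omega) (hnn h5 _ (by omega))
      · exact hx _ (by omega) (by omega) (hnn h5 _ (by omega))
    · rw [Finset.mem_singleton] at hb
      subst hb
      exact hx _ (by omega) (by omega) (hnn h5 _ (by omega))
    · rw [Finset.mem_singleton] at hb
      subst hb
      exact hx _ (by omega) (by omega) (hnn h5 _ (by omega))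
    · rw [Finset.mem_singleton] at hb
      subst hb
      refine hp _ h3 ?_ (hhigh _ (by omega))
      have : 2 * n - 1 - 2 = 2 * n - 3 := by omega
      rwa [this]
  · obtain ⟨c, hc, hb⟩ := Finset.mem_biUnion.1 hb
    simp only [Aset, Aset', Finset.mem_filter, Finset.mem_range] at hc
    unfold Tpart at hb
    split_ifs at hb with h1 h2 h2
    · simp at hb
    · rw [Finset.mem_singleton] at hb
      subst hb
      refine hx _ (by omega) (by omega) fun a ha => ?_
      obtain ⟨a1, a2, a3, a4, a5, a6⟩ := PG_bounds hSA ha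
      have e1 : a ≠ c := by rintro rfl; exact a2 h1
      have e2 : a ≠ c + 2 := by rintro rfl; exact h2 a1
      omega
    · rw [Finset.mem_singleton] at hb
      subst hb
      refine hx _ (by omega) (by omega) fun a ha => ?_
      obtain ⟨a1, a2, a3, a4, a5, a6⟩ := PG_bounds hSA ha
      have e1 : a ≠ c := by rintro rfl; exact a3 h2
      have e2 : a ≠ c - 2 := by rintro rfl; exact h1 a1
      omega
    · rw [Finset.mem_singleton] at hb
      subst hb
      refine hp _ ?_ h1 h2
      obtain ⟨j, rfl⟩ : ∃ j, c = 2 * j + 3 := ⟨(c - 3) / 2, by omega⟩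
      rcases hF j (by omega) (by omega) with h | h
      · exact absurd h (by simpa using h1)
      · exact h

/-- For every `n ≥ 3`, every Fibonacci subset `S ∈ F_n`, and every `S`-admissible set `B`:
the ideal `I_B` generated by `B` in `ℂ[x₁,…,x_{2n+1}]` is prime; `B` is an irredundant
generating set of `I_B`; and the Krull dimension of `ℂ[x₁,…,x_{2n+1}]/I_B`
equals `2n+1 − |B|`. -/
theorem admissible_prime_irredundant_dim (n : ℕ) (hn : 3 ≤ n) (S : Finset ℕ)
    (hS : IsFib n S) (B : Finset (MvPolynomial (Fin (2 * n + 1)) ℂ))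
    (hB : IsAdmissible n S B) :
    (Ideal.span (B : Set (MvPolynomial (Fin (2 * n + 1)) ℂ))).IsPrime ∧
    (∀ B' ⊂ B, Ideal.span (B' : Set (MvPolynomial (Fin (2 * n + 1)) ℂ)) ≠
        Ideal.span (B : Set (MvPolynomial (Fin (2 * n + 1)) ℂ))) ∧
    ringKrullDim
        (MvPolynomial (Fin (2 * n + 1)) ℂ ⧸
          Ideal.span (B : Set (MvPolynomial (Fin (2 * n + 1)) ℂ))) =
      (2 * n + 1 - B.card : ℕ) := by
  have := core (good_concrete hS.1) B (subset_concrete hn hS hB)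
  rwa [Fintype.card_fin] at this
end

section
/- For every n ≥ 3, the Krull dimension of the quotient ring C[x1, ..., x_{2n+1}]/I equals 2⌊n/2⌋ + 1, where I is the ideal generated by the 2n+1 link polynomials of P_n^3. Equivalently, the nullvariety of the 3-uniform loose hyperpath P_n^3 has dimension 2⌊n/2⌋ + 1. -/
open MvPolynomial

/-- The `2n+1` link polynomials of the 3-uniform loose hyperpath `P_n^3`:
`x₂x₃` (vertex `v₁`), `x_{2j−1}x_{2j+1}` for `1 ≤ j ≤ n` (vertices `v_{2j}`),
`x_{2j−1}x_{2j} + x_{2j+2}x_{2j+3}` for `1 ≤ j ≤ n−1` (vertices `v_{2j+1}`), and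
`x_{2n−1}x_{2n}` (vertex `v_{2n+1}`). -/
noncomputable def linkSet (n : ℕ) : Set (MvPolynomial (Fin (2 * n + 1)) ℂ) :=
  {xv n 2 * xv n 3, xv n (2 * n - 1) * xv n (2 * n)} ∪
  (fun j => xv n (2 * j - 1) * xv n (2 * j + 1)) '' {j | 1 ≤ j ∧ j ≤ n} ∪
  (fun j => xv n (2 * j - 1) * xv n (2 * j) + xv n (2 * j + 2) * xv n (2 * j + 3)) ''
    {j | 1 ≤ j ∧ j ≤ n - 1}


/-! ### Upper bound: dimension is bounded by transcendence degrees of domain quotients -/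

lemma krullDim_le_of_trdeg (A : Type) [CommRing A] [Algebra ℂ A] [Nontrivial A]
    [Algebra.FiniteType ℂ A] (d : ℕ)
    (h : ∀ Q : Ideal A, Q.IsPrime → Algebra.trdeg ℂ (A ⧸ Q) ≤ d) :
    ringKrullDim A ≤ d := by
  obtain ⟨s, g, hinj, hint⟩ := exists_integral_inj_algHom_of_fg ℂ A
  have hdim : ringKrullDim A ≤ s := by
    have h1 : ringKrullDim A ≤ ringKrullDim (MvPolynomial (Fin s) ℂ) := by
      let : Algebra (MvPolynomial (Fin s) ℂ) A := g.toRingHom.toAlgebra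
      have : Algebra.IsIntegral (MvPolynomial (Fin s) ℂ) A := ⟨hint⟩
      refine Order.krullDim_le_of_strictMono
        (PrimeSpectrum.comap (algebraMap (MvPolynomial (Fin s) ℂ) A)) ?_
      intro P Q hPQ
      exact Ideal.IsIntegral.comap_lt_comap hPQ
    refine h1.trans ?_
    rw [MvPolynomial.ringKrullDim_of_isNoetherianRing]
    simp
  refine hdim.trans ?_
  have hQ : ∃ Q : Ideal A, Q.IsPrime ∧ Q.comap g.toRingHom = ⊥ := by
    let : Algebra (MvPolynomial (Fin s) ℂ) A := g.toRingHom.toAlgebra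
    have : Algebra.IsIntegral (MvPolynomial (Fin s) ℂ) A := ⟨hint⟩
    obtain ⟨Q, -, hQ1, hQ2⟩ := Ideal.exists_ideal_over_prime_of_isIntegral
      (⊥ : Ideal (MvPolynomial (Fin s) ℂ)) (⊥ : Ideal A)
      (by
        intro x hx
        have hx' : g x = 0 := hx
        have : x = 0 := hinj (by rw [hx', map_zero])
        simp [this])
    exact ⟨Q, hQ1, hQ2⟩
  obtain ⟨Q, hQ1, hQ2⟩ := hQ
  have hi : Function.Injective ((Ideal.Quotient.mkₐ ℂ Q).comp g) := by
    rw [injective_iff_map_eq_zero]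
    intro x hx
    have hx' : g x ∈ Q := Ideal.Quotient.eq_zero_iff_mem.mp hx
    have : x ∈ Q.comap g.toRingHom := hx'
    rw [hQ2] at this
    simpa using this
  have ht := (trdeg_le_of_injective _ hi).trans (h Q hQ1)
  rw [MvPolynomial.trdeg_of_isDomain] at ht
  simp only [Cardinal.mk_fin, Cardinal.lift_natCast, Nat.cast_le] at ht
  exact_mod_cast ht

lemma isAlg_of_mem {B : Type} [CommRing B] [IsDomain B] [Algebra ℂ B] (T : Set B) (x : B)
    (hx : x ∈ Algebra.adjoin ℂ T) : IsAlgebraic (Algebra.adjoin ℂ T) x :=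
  isAlgebraic_algebraMap (⟨x, hx⟩ : Algebra.adjoin ℂ T)

/-- Solving a linear equation `u * x + c = 0`, `u ≠ 0` over the adjoined algebra. -/
lemma isAlg_of_lin {B : Type} [CommRing B] [IsDomain B] [Algebra ℂ B] (T : Set B) (u x c : B)
    (hu : u ∈ Algebra.adjoin ℂ T) (hc : c ∈ Algebra.adjoin ℂ T) (hu0 : u ≠ 0)
    (h : u * x + c = 0) : IsAlgebraic (Algebra.adjoin ℂ T) x := by
  refine ⟨Polynomial.C ⟨u, hu⟩ * Polynomial.X + Polynomial.C ⟨c, hc⟩, ?_, ?_⟩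
  · intro h0
    have := congrArg (fun p => Polynomial.coeff p 1) h0
    simp [Polynomial.coeff_C] at this
    exact hu0 (congrArg Subtype.val this)
  · simpa [Subalgebra.algebraMap_def] using h

lemma trdeg_le_of_gens {B : Type} [CommRing B] [IsDomain B] [Algebra ℂ B] (n : ℕ)
    (a b : ℕ → B) (hgen : Algebra.adjoin ℂ (a '' {j | j ≤ n} ∪ b '' {j | 1 ≤ j ∧ j ≤ n}) = ⊤)
    (T : Finset B) (ha : ∀ j ≤ n, IsAlgebraic (Algebra.adjoin ℂ (T : Set B)) (a j))
    (hb : ∀ j, 1 ≤ j → j ≤ n → IsAlgebraic (Algebra.adjoin ℂ (T : Set B)) (b j)) :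
    Algebra.trdeg ℂ B ≤ T.card := by
  have halg : Algebra.IsAlgebraic (Algebra.adjoin ℂ (T : Set B)) B := by
    refine ⟨fun x => ?_⟩
    have hle : Algebra.adjoin ℂ (a '' {j | j ≤ n} ∪ b '' {j | 1 ≤ j ∧ j ≤ n}) ≤
        (Subalgebra.algebraicClosure (Algebra.adjoin ℂ (T : Set B)) B).restrictScalars ℂ := by
      rw [Algebra.adjoin_le_iff]
      rintro y (⟨j, hj, rfl⟩ | ⟨j, hj, rfl⟩)
      · exact ha j hj
      · exact hb j hj.1 hj.2
    rw [hgen] at hle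
    exact hle (Algebra.mem_top (x := x))
  have := Algebra.IsAlgebraic.trdeg_le_cardinalMk ℂ (T : Set B)
  simpa using this

section bounds

variable {B : Type} [CommRing B] [IsDomain B] [Algebra ℂ B]

open Classical in
lemma trdeg_le_even (n : ℕ) (a b : ℕ → B)
    (hgen : Algebra.adjoin ℂ (a '' {j | j ≤ n} ∪ b '' {j | 1 ≤ j ∧ j ≤ n}) = ⊤)
    (h1 : ∀ j, j < n → a j * a (j + 1) = 0)
    (h0 : b 1 * a 1 = 0)
    (hE : ∀ j, j + 1 < n → a j * b (j + 1) + b (j + 2) * a (j + 2) = 0) :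
    Algebra.trdeg ℂ B ≤ (n + 1 : ℕ) := by
  let y : ℕ → B := fun j => if j = 0 then a 0 else if a j ≠ 0 then a j else b j
  let T : Finset B := (Finset.range (n + 1)).image y
  have hT : ∀ j ≤ n, y j ∈ Algebra.adjoin ℂ (T : Set B) := fun j hj =>
    Algebra.subset_adjoin (Finset.mem_coe.2 (Finset.mem_image_of_mem y
      (Finset.mem_range.2 (by omega))))
  have ha : ∀ j ≤ n, a j ∈ Algebra.adjoin ℂ (T : Set B) := by
    intro j hj
    by_cases h : a j = 0
    · rw [h]; exact zero_mem _
    · have := hT j hj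
      by_cases hj0 : j = 0
      · subst hj0; simpa [y] using this
      · simpa [y, h, hj0] using this
  have hb : ∀ j, 1 ≤ j → j ≤ n → a j = 0 → b j ∈ Algebra.adjoin ℂ (T : Set B) := by
    intro j hj1 hj h
    have := hT j hj
    have hj0 : j ≠ 0 := by omega
    simpa [y, h, hj0] using this
  have key := trdeg_le_of_gens n a b hgen T (fun j hj => isAlg_of_mem _ _ (ha j hj)) ?_
  · refine key.trans ?_
    have : T.card ≤ n + 1 := by
      simpa using (Finset.card_image_le (s := Finset.range (n + 1)) (f := y))
    exact_mod_cast this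
  · intro j hj1 hj
    by_cases h : a j = 0
    · exact isAlg_of_mem _ _ (hb j hj1 hj h)
    · obtain ⟨i, rfl⟩ : ∃ i, j = i + 1 := ⟨j - 1, by omega⟩
      rcases Nat.eq_zero_or_pos i with rfl | hi
      · exact isAlg_of_lin _ (a 1) (b 1) 0 (ha 1 hj) (zero_mem _) h (by linear_combination h0)
      · obtain ⟨k, rfl⟩ : ∃ k, i = k + 1 := ⟨i - 1, by omega⟩
        have hz : a (k + 1) = 0 :=
          (mul_eq_zero.1 (h1 (k + 1) (by omega))).resolve_right h
        exact isAlg_of_lin _ (a (k + 2)) (b (k + 2)) (a k * b (k + 1)) (ha _ hj)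
          (mul_mem (ha k (by omega)) (hb (k + 1) (by omega) (by omega) hz)) h
          (by linear_combination hE k (by omega))

open Classical in
lemma trdeg_le_odd (k : ℕ) (a b : ℕ → B)
    (hgen : Algebra.adjoin ℂ (a '' {j | j ≤ 2 * k + 1} ∪
      b '' {j | 1 ≤ j ∧ j ≤ 2 * k + 1}) = ⊤)
    (h1 : ∀ j, j < 2 * k + 1 → a j * a (j + 1) = 0)
    (h0 : b 1 * a 1 = 0)
    (hE : ∀ j, j + 1 < 2 * k + 1 → a j * b (j + 1) + b (j + 2) * a (j + 2) = 0)
    (hn : a (2 * k) * b (2 * k + 1) = 0) :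
    Algebra.trdeg ℂ B ≤ (2 * k + 1 : ℕ) := by
  let z : ℕ → B := fun i => if a (2 * i) ≠ 0 then a (2 * i) else
    if a (2 * i + 1) ≠ 0 then a (2 * i + 1) else b (2 * i + 1)
  let T : Finset B := (Finset.range (k + 1)).image z ∪
    (Finset.range k).image (fun i => b (2 * i + 2))
  have hz : ∀ i ≤ k, z i ∈ Algebra.adjoin ℂ (T : Set B) := fun j hj =>
    Algebra.subset_adjoin (Finset.mem_coe.2 (Finset.mem_union_left _ (Finset.mem_image_of_mem z
      (Finset.mem_range.2 (by omega)))))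
  have hbe : ∀ i < k, b (2 * i + 2) ∈ Algebra.adjoin ℂ (T : Set B) := fun j hj =>
    Algebra.subset_adjoin (Finset.mem_coe.2 (Finset.mem_union_right _
      (Finset.mem_image_of_mem (fun i => b (2 * i + 2)) (Finset.mem_range.2 hj))))
  have hae : ∀ i ≤ k, a (2 * i) ∈ Algebra.adjoin ℂ (T : Set B) := by
    intro i hi
    by_cases h : a (2 * i) = 0
    · rw [h]; exact zero_mem _
    · simpa [z, h] using hz i hi
  have hao : ∀ i ≤ k, a (2 * i + 1) ∈ Algebra.adjoin ℂ (T : Set B) := by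
    intro i hi
    by_cases h : a (2 * i + 1) = 0
    · rw [h]; exact zero_mem _
    · have h' : a (2 * i) = 0 := (mul_eq_zero.1 (h1 (2 * i) (by omega))).resolve_right h
      simpa [z, h, h'] using hz i hi
  have key := trdeg_le_of_gens (2 * k + 1) a b hgen T ?_ ?_
  · refine key.trans ?_
    have h2 : T.card ≤ (k + 1) + k := by
      refine (Finset.card_union_le _ _).trans (add_le_add ?_ ?_)
      · simpa using (Finset.card_image_le (s := Finset.range (k + 1)) (f := z))
      · simpa using (Finset.card_image_le (s := Finset.range k) (f := fun i => b (2 * i + 2)))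
    have : T.card ≤ 2 * k + 1 := by omega
    exact_mod_cast this
  · intro j hj
    rcases Nat.even_or_odd' j with ⟨i, rfl | rfl⟩
    · exact isAlg_of_mem _ _ (hae i (by omega))
    · exact isAlg_of_mem _ _ (hao i (by omega))
  · intro j hj1 hj
    rcases Nat.even_or_odd' j with ⟨i, rfl | rfl⟩
    · obtain ⟨m, rfl⟩ : ∃ m, i = m + 1 := ⟨i - 1, by omega⟩
      exact isAlg_of_mem _ _ (hbe m (by omega))
    · have hi : i ≤ k := by omega
      by_cases h : a (2 * i) = 0
      · by_cases h' : a (2 * i + 1) = 0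
        · refine isAlg_of_mem _ _ ?_
          simpa [z, h, h'] using hz i hi
        · rcases Nat.eq_zero_or_pos i with rfl | hi0
          · exact isAlg_of_lin _ (a 1) (b 1) 0 (hao 0 hi) (zero_mem _) h'
              (by linear_combination h0)
          · obtain ⟨m, rfl⟩ : ∃ m, i = m + 1 := ⟨i - 1, by omega⟩
            exact isAlg_of_lin _ (a (2 * (m + 1) + 1)) _ (a (2 * m + 1) * b (2 * m + 2))
              (hao _ hi) (mul_mem (hao m (by omega)) (hbe m (by omega))) h'
              (by
                have := hE (2 * m + 1) (by omega)
                rw [show 2 * (m + 1) + 1 = 2 * m + 1 + 2 by ring]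
                linear_combination this)
      · rcases Nat.lt_or_ge i k with hik | hik
        · exact isAlg_of_lin _ (a (2 * i)) _ (b (2 * i + 2) * a (2 * i + 2)) (hae i hi)
            (mul_mem (hbe i hik) (hae (i + 1) (by omega))) h
            (hE (2 * i) (by omega))
        · obtain rfl : i = k := by omega
          exact isAlg_of_lin _ (a (2 * i)) _ 0 (hae i hi) (zero_mem _) h
            (by linear_combination hn)

end bounds

/-! ### Lower bound: height of the origin -/

/-- Kill the variables with index `< k`. -/
noncomputable def killHom (N k : ℕ) : MvPolynomial (Fin N) ℂ →ₐ[ℂ] MvPolynomial (Fin N) ℂ :=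
  aeval (fun i => if (i : ℕ) < k then 0 else X i)

lemma killHom_X (N k : ℕ) (i : Fin N) :
    killHom N k (X i) = if (i : ℕ) < k then 0 else X i := by
  simp [killHom]

lemma le_height_ker_killHom (N k : ℕ) (hk : k ≤ N) :
    (k : ℕ∞) ≤ (RingHom.ker (killHom N k)).height := by
  induction k with
  | zero => simp
  | succ k ih =>
    have hlt : RingHom.ker (killHom N k) < RingHom.ker (killHom N (k + 1)) := by
      refine lt_of_le_of_ne ?_ ?_
      · have hcomp : (killHom N (k + 1)).comp (killHom N k) = killHom N (k + 1) := by
          apply MvPolynomial.algHom_ext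
          intro i
          rw [AlgHom.comp_apply, killHom_X]
          split_ifs with h
          · rw [map_zero, killHom_X, if_pos (by omega)]
          · rfl
        intro x hx
        rw [RingHom.mem_ker] at hx ⊢
        rw [← hcomp, AlgHom.comp_apply, hx, map_zero]
      · intro heq
        have hmem : (X ⟨k, by omega⟩ : MvPolynomial (Fin N) ℂ) ∈
            RingHom.ker (killHom N (k + 1)) := by
          rw [RingHom.mem_ker, killHom_X]
          simp
        rw [← heq, RingHom.mem_ker, killHom_X] at hmem
        simp at hmem
    have : (RingHom.ker (killHom N k)).IsPrime := RingHom.ker_isPrime _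
    have : (RingHom.ker (killHom N (k + 1))).IsPrime := RingHom.ker_isPrime _
    have h2 := Ideal.height_add_one_le_of_lt_of_isPrime hlt
    push_cast
    exact (add_le_add_left (ih (by omega)) 1).trans h2

lemma xv_mem_ker (n i : ℕ) : xv n i ∈ RingHom.ker (killHom (2 * n + 1) (2 * n + 1)) := by
  rw [RingHom.mem_ker, xv, killHom_X, if_pos]
  exact Nat.mod_lt _ (by omega)

lemma arith_cancel (D : WithBot ℕ∞) (H : ℕ∞) (N d c : ℕ) (h2 : (N : ℕ∞) ≤ H)
    (h1 : (H : WithBot ℕ∞) ≤ D + ((c : ℕ∞) : WithBot ℕ∞)) (hcard : d + c ≤ N) :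
    (d : WithBot ℕ∞) ≤ D := by
  have h3 : ((N : ℕ∞) : WithBot ℕ∞) ≤ D + ((c : ℕ∞) : WithBot ℕ∞) :=
    le_trans (WithBot.coe_le_coe.2 h2) h1
  induction D with
  | bot => simp at h3
  | coe D =>
    induction D with
    | top =>
      have : ((d : ℕ∞) : WithBot ℕ∞) ≤ ((⊤ : ℕ∞) : WithBot ℕ∞) := WithBot.coe_le_coe.2 le_top
      exact this
    | coe D =>
      norm_cast at h3 ⊢
      omega

/-- General lower bound from a finite set of equations through the origin. -/
lemma lower_bound (n d : ℕ) (s : Finset (MvPolynomial (Fin (2 * n + 1)) ℂ))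
    (hs : ∀ f ∈ s, f ∈ RingHom.ker (killHom (2 * n + 1) (2 * n + 1)))
    (hI : linkSet n ⊆ Ideal.span (s : Set (MvPolynomial (Fin (2 * n + 1)) ℂ)))
    (hcard : d + s.card ≤ 2 * n + 1) :
    (d : WithBot ℕ∞) ≤
      ringKrullDim (MvPolynomial (Fin (2 * n + 1)) ℂ ⧸ Ideal.span (linkSet n)) := by
  have hP : (RingHom.ker (killHom (2 * n + 1) (2 * n + 1))).IsPrime := RingHom.ker_isPrime _
  have h1 := Ideal.height_le_ringKrullDim_quotient_add_encard
    (p := RingHom.ker (killHom (2 * n + 1) (2 * n + 1)))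
    (s : Set (MvPolynomial (Fin (2 * n + 1)) ℂ)) (fun f hf => hs f hf)
  have h2 := le_height_ker_killHom (2 * n + 1) (2 * n + 1) le_rfl
  have h3 : ringKrullDim (MvPolynomial (Fin (2 * n + 1)) ℂ ⧸
        Ideal.span (s : Set (MvPolynomial (Fin (2 * n + 1)) ℂ))) ≤
      ringKrullDim (MvPolynomial (Fin (2 * n + 1)) ℂ ⧸ Ideal.span (linkSet n)) :=
    ringKrullDim_le_of_surjective (Ideal.Quotient.factor (Ideal.span_le.2 hI))
      (Ideal.Quotient.factor_surjective _)
  rw [Set.encard_coe_eq_coe_finsetCard] at h1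
  exact le_trans (arith_cancel _ _ _ _ _ h2 h1 hcard) h3

open Classical in
lemma lower_even (k : ℕ) (hk : 1 ≤ k) : ((2 * k + 1 : ℕ) : WithBot ℕ∞) ≤
    ringKrullDim (MvPolynomial (Fin (2 * (2 * k) + 1)) ℂ ⧸ Ideal.span (linkSet (2 * k))) := by
  let f : ℕ → MvPolynomial (Fin (2 * (2 * k) + 1)) ℂ := fun i => xv (2 * k) (4 * i + 3)
  let g : ℕ → MvPolynomial (Fin (2 * (2 * k) + 1)) ℂ := fun i =>
    xv (2 * k) (4 * i + 1) * xv (2 * k) (4 * i + 2) + xv (2 * k) (4 * i + 4) * xv (2 * k) (4 * i + 5)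
  let s := (Finset.range k).image f ∪ (Finset.range k).image g
  have hf : ∀ m, m % 4 = 3 → m < 4 * k → xv (2 * k) m ∈ Ideal.span (s : Set _) := by
    intro m hm hmk
    refine Ideal.subset_span (Finset.mem_coe.2 (Finset.mem_union_left _
      (Finset.mem_image.2 ⟨m / 4, Finset.mem_range.2 (by omega), ?_⟩)))
    have : 4 * (m / 4) + 3 = m := by omega
    simp only [f, this]
  have hg : ∀ i < k, g i ∈ Ideal.span (s : Set _) := fun i hi =>
    Ideal.subset_span (Finset.mem_coe.2 (Finset.mem_union_right _
      (Finset.mem_image_of_mem g (Finset.mem_range.2 hi))))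
  refine lower_bound (2 * k) (2 * k + 1) s ?_ ?_ ?_
  · intro p hp
    rcases Finset.mem_union.1 hp with hp | hp
    · obtain ⟨i, -, rfl⟩ := Finset.mem_image.1 hp
      exact xv_mem_ker _ _
    · obtain ⟨i, -, rfl⟩ := Finset.mem_image.1 hp
      exact add_mem (Ideal.mul_mem_left _ _ (xv_mem_ker _ _))
        (Ideal.mul_mem_left _ _ (xv_mem_ker _ _))
  · rintro p ((hp | ⟨j, ⟨hj1, hj2⟩, rfl⟩) | ⟨j, ⟨hj1, hj2⟩, rfl⟩)
    · rcases hp with rfl | rfl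
      · exact Ideal.mul_mem_left _ _ (hf _ (by omega) (by omega))
      · exact Ideal.mul_mem_right _ _ (hf _ (by omega) (by omega))
    · rcases Nat.even_or_odd' j with ⟨i, rfl | rfl⟩
      · exact Ideal.mul_mem_right _ _ (hf _ (by omega) (by omega))
      · exact Ideal.mul_mem_left _ _ (hf _ (by omega) (by omega))
    · rcases Nat.even_or_odd' j with ⟨i, rfl | rfl⟩
      · exact add_mem (Ideal.mul_mem_right _ _ (hf _ (by omega) (by omega)))
          (Ideal.mul_mem_left _ _ (hf _ (by omega) (by omega)))
      · have := hg i (by omega)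
        simp only [g] at this
        have e1 : 2 * (2 * i + 1) - 1 = 4 * i + 1 := by omega
        have e2 : 2 * (2 * i + 1) = 4 * i + 2 := by omega
        have e3 : 2 * (2 * i + 1) + 2 = 4 * i + 4 := by omega
        have e4 : 2 * (2 * i + 1) + 3 = 4 * i + 5 := by omega
        simp only [e1, e3, e4]
        rw [e2]
        exact this
  · have h2 : s.card ≤ k + k := by
      refine (Finset.card_union_le _ _).trans (add_le_add ?_ ?_)
      · simpa using (Finset.card_image_le (s := Finset.range k) (f := f))
      · simpa using (Finset.card_image_le (s := Finset.range k) (f := g))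
    omega

open Classical in
lemma lower_any (n : ℕ) (hn : 3 ≤ n) : (n : WithBot ℕ∞) ≤
    ringKrullDim (MvPolynomial (Fin (2 * n + 1)) ℂ ⧸ Ideal.span (linkSet n)) := by
  let f : ℕ → MvPolynomial (Fin (2 * n + 1)) ℂ := fun i => xv n (2 * i + 1)
  let s := (Finset.range (n + 1)).image f
  have hf : ∀ m, m % 2 = 1 → m ≤ 2 * n + 1 → xv n m ∈ Ideal.span (s : Set _) := by
    intro m hm hmk
    refine Ideal.subset_span (Finset.mem_coe.2
      (Finset.mem_image.2 ⟨m / 2, Finset.mem_range.2 (by omega), ?_⟩))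
    have : 2 * (m / 2) + 1 = m := by omega
    simp only [f, this]
  refine lower_bound n n s ?_ ?_ ?_
  · intro p hp
    obtain ⟨i, -, rfl⟩ := Finset.mem_image.1 hp
    exact xv_mem_ker _ _
  · rintro p ((hp | ⟨j, ⟨hj1, hj2⟩, rfl⟩) | ⟨j, ⟨hj1, hj2⟩, rfl⟩)
    · rcases hp with rfl | rfl
      · exact Ideal.mul_mem_left _ _ (hf _ (by omega) (by omega))
      · exact Ideal.mul_mem_right _ _ (hf _ (by omega) (by omega))
    · exact Ideal.mul_mem_right _ _ (hf _ (by omega) (by omega))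
    · exact add_mem (Ideal.mul_mem_right _ _ (hf _ (by omega) (by omega)))
          (Ideal.mul_mem_left _ _ (hf _ (by omega) (by omega)))
  · have h2 : s.card ≤ n + 1 := by
      simpa using (Finset.card_image_le (s := Finset.range (n + 1)) (f := f))
    omega

lemma upper (n : ℕ) (hn : 3 ≤ n) :
    ringKrullDim (MvPolynomial (Fin (2 * n + 1)) ℂ ⧸ Ideal.span (linkSet n)) ≤
      (2 * (n / 2) + 1 : ℕ) := by
  have : Nontrivial (MvPolynomial (Fin (2 * n + 1)) ℂ ⧸ Ideal.span (linkSet n)) := by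
    by_contra hcon
    rw [not_nontrivial_iff_subsingleton] at hcon
    have h := lower_any n hn
    rw [ringKrullDim_eq_bot_of_subsingleton] at h
    simp at h
  refine krullDim_le_of_trdeg _ _ ?_
  intro Q hQ
  let φ : MvPolynomial (Fin (2 * n + 1)) ℂ →ₐ[ℂ]
      ((MvPolynomial (Fin (2 * n + 1)) ℂ ⧸ Ideal.span (linkSet n)) ⧸ Q) :=
    (Ideal.Quotient.mkₐ ℂ Q).comp (Ideal.Quotient.mkₐ ℂ (Ideal.span (linkSet n)))
  have hφs : Function.Surjective φ :=
    (Ideal.Quotient.mkₐ_surjective ℂ Q).comp (Ideal.Quotient.mkₐ_surjective ℂ _)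
  have hφ : ∀ p ∈ linkSet n, φ p = 0 := by
    intro p hp
    have : (Ideal.Quotient.mkₐ ℂ (Ideal.span (linkSet n))) p = 0 :=
      Ideal.Quotient.eq_zero_iff_mem.2 (Ideal.subset_span hp)
    simp only [φ, AlgHom.comp_apply, this, map_zero]
  clear_value φ
  let a : ℕ → ((MvPolynomial (Fin (2 * n + 1)) ℂ ⧸ Ideal.span (linkSet n)) ⧸ Q) :=
    fun j => φ (xv n (2 * j + 1))
  let b : ℕ → ((MvPolynomial (Fin (2 * n + 1)) ℂ ⧸ Ideal.span (linkSet n)) ⧸ Q) :=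
    fun j => φ (xv n (2 * j))
  have hgen : Algebra.adjoin ℂ (a '' {j | j ≤ n} ∪ b '' {j | 1 ≤ j ∧ j ≤ n}) = ⊤ := by
    rw [eq_top_iff, ← (AlgHom.range_eq_top φ).2 hφs, ← Algebra.map_top,
      ← MvPolynomial.adjoin_range_X, AlgHom.map_adjoin]
    apply Algebra.adjoin_mono
    rintro _ ⟨_, ⟨i, rfl⟩, rfl⟩
    have hi := i.2
    rcases Nat.even_or_odd' (i : ℕ) with ⟨m, hm | hm⟩
    · refine Or.inl ⟨m, by simp only [Set.mem_ofPred_eq]; omega, ?_⟩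
      simp only [a, xv]
      congr 2
      apply Fin.ext
      simp only
      rw [Nat.mod_eq_of_lt (by omega)]
      omega
    · refine Or.inr ⟨m + 1, by simp only [Set.mem_ofPred_eq]; omega, ?_⟩
      simp only [b, xv]
      congr 2
      apply Fin.ext
      simp only
      rw [Nat.mod_eq_of_lt (by omega)]
      omega
  have h1 : ∀ j, j < n → a j * a (j + 1) = 0 := by
    intro j hj
    have := hφ _ (Or.inl (Or.inr ⟨j + 1, ⟨by omega, by omega⟩, rfl⟩))
    have e : 2 * (j + 1) - 1 = 2 * j + 1 := by omega
    simpa only [map_mul, e] using this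
  have h0 : b 1 * a 1 = 0 := by
    have := hφ _ (Or.inl (Or.inl (Or.inl rfl)))
    simpa only [map_mul] using this
  have hE : ∀ j, j + 1 < n → a j * b (j + 1) + b (j + 2) * a (j + 2) = 0 := by
    intro j hj
    have := hφ _ (Or.inr ⟨j + 1, ⟨by omega, by omega⟩, rfl⟩)
    have e : 2 * (j + 1) - 1 = 2 * j + 1 := by omega
    have e2 : 2 * (j + 1) + 2 = 2 * (j + 2) := by omega
    have e3 : 2 * (j + 1) + 3 = 2 * (j + 2) + 1 := by omega
    simp only [map_mul, map_add, e, e2, e3] at this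
    exact this
  have hl : a (n - 1) * b n = 0 := by
    have := hφ _ (Or.inl (Or.inl (Or.inr rfl)))
    have e : 2 * (n - 1) + 1 = 2 * n - 1 := by omega
    simp only [a, b, e]
    simpa only [map_mul] using this
  rcases Nat.even_or_odd' n with ⟨k, hk | hk⟩
  · have := trdeg_le_even n a b hgen h1 h0 hE
    have e : 2 * (n / 2) + 1 = n + 1 := by omega
    rwa [e]
  · have e : 2 * (n / 2) + 1 = 2 * k + 1 := by omega
    rw [e]
    have e2 : n - 1 = 2 * k := by omega
    rw [e2] at hl
    have hbn : b n = b (2 * k + 1) := congrArg b hk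
    rw [hbn] at hl
    refine trdeg_le_odd k a b ?_ (fun j hj => h1 j (by omega)) h0 (fun j hj => hE j (by omega)) hl
    rw [← hgen, ← hk]

/-- For every `n ≥ 3`, the Krull dimension of `ℂ[x₁,…,x_{2n+1}]/I`, where `I` is the
ideal generated by the `2n+1` link polynomials of `P_n^3`, equals `2⌊n/2⌋ + 1`;
i.e. the nullvariety of `P_n^3` has dimension `2⌊n/2⌋ + 1`. -/
theorem nullvariety_dim (n : ℕ) (hn : 3 ≤ n) :
    ringKrullDim (MvPolynomial (Fin (2 * n + 1)) ℂ ⧸ Ideal.span (linkSet n)) =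
      (2 * (n / 2) + 1 : ℕ) := by
  refine le_antisymm (upper n hn) ?_
  rcases Nat.even_or_odd' n with ⟨k, hk | hk⟩
  · have e : n / 2 = k := by omega
    rw [e]
    subst hk
    exact lower_even k (by omega)
  · have e : 2 * (n / 2) + 1 = n := by omega
    rw [e]
    exact lower_any n hn
end
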